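/- arXiv:2305.08606 — 2 statements merged into one kernel-verified Lean document; each statement's English description precedes it below -/
import Mathlib

section
/- Let p be a complex polynomial of degree n with n > 1, and define q(z) = z − conj(p(z)). Then the zero set {z ∈ ℂ : q(z) = 0}, equivalently the set of solutions of conj(z) = p(z), is finite and has at most 3n − 2 elements. -/
section ksA
open Complex Polynomial Filter Topology


lemma ks_inverse_bound (f : ℂ[X]) (a b : ℂ) (r M : ℝ) (hr : 0 < r)
    (hcrit : ∀ z, f.eval z ∈ Metric.ball b r → f.derivative.eval z ≠ 0)
    (hM : ∀ z, f.eval z ∈ Metric.ball b r → ‖z‖ ≤ M) (hab : f.eval a = b) :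
    r ≤ M * ‖f.derivative.eval a‖ := by
  have hcov := (Polynomial.isCoveringMapOn_eval f).mono (t := Metric.ball b r) (by
    rintro w hw ⟨z, hz, rfl⟩
    exact hcrit z hw hz)
  have : ContractibleSpace (Metric.ball b r) :=
    (convex_ball b r).contractibleSpace ⟨b, Metric.mem_ball_self hr⟩
  have : LocallyPathConnectedSpace (Metric.ball b r) :=
    (Metric.isOpen_ball (x := b) (ε := r)).locallyPathConnectedSpace
  obtain ⟨h, ⟨h0, h1⟩, -⟩ := hcov.existsUnique_continuousMap_lifts (A := Metric.ball b r)
    ⟨Subtype.val, continuous_subtype_val⟩ (a₀ := ⟨b, Metric.mem_ball_self hr⟩) (e₀ := a)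
    (by simpa using hab) (by intro x; exact x.2)
  classical
  let H : ℂ → ℂ := fun w => if hw : w ∈ Metric.ball b r then h ⟨w, hw⟩ else 0
  have hHsub : ∀ w : Metric.ball b r, H w = h w := by
    intro w; simp only [H, dif_pos w.2]
  have hHcont : ContinuousOn H (Metric.ball b r) := by
    rw [continuousOn_iff_continuous_domRestrict]
    have : (Metric.ball b r).domRestrict H = h := by
      ext w; exact hHsub w
    rw [this]; exact h.continuous
  have hfH : ∀ w ∈ Metric.ball b r, f.eval (H w) = w := by
    intro w hw
    have := congrFun h1 ⟨w, hw⟩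
    have h2 := hHsub ⟨w, hw⟩
    simp only at h2
    rw [h2]; simpa using this
  have hderiv : ∀ w ∈ Metric.ball b r, HasDerivAt H (f.derivative.eval (H w))⁻¹ w := by
    intro w hw
    refine HasDerivAt.of_local_left_inverse (f := fun z => f.eval z)
      (hHcont.continuousAt (Metric.isOpen_ball.mem_nhds hw))
      (f.hasDerivAt (H w)) (hcrit _ (by rw [hfH w hw]; exact hw)) ?_
    filter_upwards [Metric.isOpen_ball.mem_nhds hw] with y hy using hfH y hy
  have hb : b ∈ Metric.ball b r := Metric.mem_ball_self hr
  have hHb : H b = a := by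
    rw [← h0]; exact hHsub ⟨b, hb⟩
  have hne : f.derivative.eval a ≠ 0 := hcrit a (by rw [hab]; exact hb)
  have key : ∀ ρ, 0 < ρ → ρ < r → ρ ≤ M * ‖f.derivative.eval a‖ := by
    intro ρ hρ hρr
    have hsub : Metric.closedBall b ρ ⊆ Metric.ball b r := Metric.closedBall_subset_ball hρr
    have := Complex.norm_deriv_le_of_forall_mem_sphere_norm_le (c := b) (R := ρ) (C := M) (f := H) hρ
      (by
        apply DifferentiableOn.diffContOnCl
        intro w hw
        have hw' : w ∈ Metric.closedBall b ρ := by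
          rw [closure_ball b hρ.ne'] at hw; exact hw
        exact (hderiv w (hsub hw')).differentiableAt.differentiableWithinAt)
      (by
        intro z hz
        have hz' := hsub (Metric.sphere_subset_closedBall hz)
        exact hM _ (by rw [hfH z hz']; exact hz'))
    rw [(hderiv b hb).deriv, hHb, norm_inv] at this
    have hpos : 0 < ‖f.derivative.eval a‖ := norm_pos_iff.mpr hne
    rw [inv_eq_one_div, div_le_div_iff₀ hpos hρ] at this
    linarith
  refine le_of_forall_lt fun c hc => ?_
  have h1 := key ((max c 0 + r) / 2) (by have := le_max_right c 0; linarith)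
    (by have := max_lt hc hr; linarith)
  have h2 := max_lt hc hr
  have h3 := le_max_left c 0
  linarith

lemma ks_escape (Q : ℂ[X]) (hQ : 1 < Q.natDegree) (z₀ : ℂ) :
    ∃ M : ℝ, 0 < M ∧ ∀ z, Tendsto (fun k => (fun x => Q.eval x)^[k] z) atTop (𝓝 z₀) → ‖z‖ ≤ M := by
  have hd : 0 < Q.divX.degree := by
    rw [← natDegree_pos_iff_degree_pos, natDegree_divX_eq_natDegree_tsub_one]; omega
  have ht := Q.divX.tendsto_norm_atTop hd (tendsto_norm_cobounded_atTop (E := ℂ))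
  have ht' := (ht.eventually_ge_atTop 2).and
    ((tendsto_norm_cobounded_atTop (E := ℂ)).eventually_ge_atTop ‖Q.coeff 0‖)
  rw [(Metric.hasBasis_cobounded_compl_closedBall (0:ℂ)).eventually_iff] at ht'
  obtain ⟨M, -, hM⟩ := ht'
  have hM' : ∀ z : ℂ, M < ‖z‖ → ‖z‖ ≤ ‖Q.eval z‖ := by
    intro z hz
    obtain ⟨h1, h2⟩ := hM (x := z) (by simpa using hz)
    have : Q.eval z = Q.divX.eval z * z + Q.coeff 0 := by
      conv_lhs => rw [← divX_mul_X_add Q]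
      simp
    rw [this]
    have h3 := norm_sub_le_norm_add (Q.divX.eval z * z) (Q.coeff 0)
    rw [norm_mul] at h3
    nlinarith [norm_nonneg z]
  refine ⟨max (max M ‖z₀‖) 1, by positivity, fun z hz => ?_⟩
  by_contra! hlt
  have h1 : ∀ k, ‖z‖ ≤ ‖(fun x => Q.eval x)^[k] z‖ := by
    intro k
    induction k with
    | zero => simp
    | succ k ih =>
      rw [Function.iterate_succ_apply']
      refine ih.trans (hM' _ (lt_of_lt_of_le ?_ ih))
      exact lt_of_le_of_lt ((le_max_left _ _).trans (le_max_left _ _)) hlt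
  have h2 := ge_of_tendsto' hz.norm h1
  have h3 := (le_max_right M ‖z₀‖).trans (le_max_left _ 1)
  linarith

lemma ks_core (Q : ℂ[X]) (hQ : 1 < Q.natDegree) (z₀ : ℂ)
    (hcrit : ∀ c, Q.derivative.eval c = 0 →
      ¬ Tendsto (fun k => (fun x => Q.eval x)^[k] c) atTop (𝓝 z₀)) :
    ∃ M : ℝ, 0 < M ∧ ∀ (x₀ : ℂ) (k : ℕ) (r : ℝ), 0 < r →
      (∀ z ∈ Metric.ball ((fun x => Q.eval x)^[k] x₀) r,
        Tendsto (fun k => (fun x => Q.eval x)^[k] z) atTop (𝓝 z₀)) →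
      r ≤ M * ‖∏ j ∈ Finset.range k, Q.derivative.eval ((fun x => Q.eval x)^[j] x₀)‖ := by
  obtain ⟨M, hM0, hM⟩ := ks_escape Q hQ z₀
  refine ⟨M, hM0, fun x₀ k r hr hball => ?_⟩
  set q : ℂ → ℂ := fun x => Q.eval x with hq
  have hev : ∀ k z, (Q.comp^[k] X).eval z = q^[k] z := by
    intro k z; rw [iterate_comp_eval]; simp [hq]
  have hdv : ∀ k z, (Q.comp^[k] X).derivative.eval z =
      ∏ j ∈ Finset.range k, Q.derivative.eval (q^[j] z) := by
    intro k z
    induction k with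
    | zero => simp
    | succ k ih =>
      rw [Function.iterate_succ_apply', derivative_comp, eval_mul, eval_comp, ih, hev,
        Finset.prod_range_succ]
  have hback : ∀ z k, Tendsto (fun j => q^[j] (q^[k] z)) atTop (𝓝 z₀) →
      Tendsto (fun j => q^[j] z) atTop (𝓝 z₀) := by
    intro z k h
    rw [← tendsto_add_atTop_iff_nat k]
    simpa only [← Function.iterate_add_apply] using h
  rw [← hdv]
  refine ks_inverse_bound _ x₀ (q^[k] x₀) r M hr ?_ ?_ (hev k x₀)
  · intro z hz
    rw [hev] at hz
    rw [hdv, Finset.prod_ne_zero_iff]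
    intro j hj h0
    refine hcrit _ h0 ?_
    have hz' := hback z k (hball _ hz)
    have := (tendsto_add_atTop_iff_nat j).mpr hz'
    simpa only [Function.iterate_add_apply] using this
  · intro z hz
    rw [hev] at hz
    exact hM z (hback z k (hball _ hz))

lemma ks_attr (Q : ℂ[X]) (hQ : 1 < Q.natDegree) (z₀ : ℂ) (hfix : Q.eval z₀ = z₀)
    (hlt : ‖Q.derivative.eval z₀‖ < 1) :
    ∃ c, Q.derivative.eval c = 0 ∧
      Tendsto (fun k => (fun x => Q.eval x)^[k] c) atTop (𝓝 z₀) := by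
  by_contra! hcon
  obtain ⟨M, hM0, hM⟩ := ks_core Q hQ z₀ hcon
  set q : ℂ → ℂ := fun x => Q.eval x with hq
  have hiter : ∀ k, q^[k] z₀ = z₀ := fun k => Function.iterate_fixed hfix k
  -- local contraction
  obtain ⟨lam, hl1, hl2⟩ := exists_between hlt
  have hlam : 0 ≤ lam := (norm_nonneg _).trans hl1.le
  have hd := (Q.hasDerivAt z₀)
  have hsl := hd.tendsto_slope.norm.eventually_lt_const hl1
  obtain ⟨r, hr, hball⟩ : ∃ r > 0, ∀ z ∈ Metric.ball z₀ r, ‖q z - z₀‖ ≤ lam * ‖z - z₀‖ := by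
    rw [eventually_nhdsWithin_iff, Metric.eventually_nhds_iff_ball] at hsl
    obtain ⟨r, hr, h⟩ := hsl
    refine ⟨r, hr, fun z hz => ?_⟩
    by_cases hzz : z = z₀
    · simp [hzz, hq, hfix]
    · have h1 := h z hz hzz
      rw [slope_def_field, norm_div, div_lt_iff₀ (norm_pos_iff.mpr (sub_ne_zero.mpr hzz))] at h1
      rw [hfix] at h1
      exact h1.le
  have hconv : ∀ z ∈ Metric.ball z₀ r, Tendsto (fun k => q^[k] z) atTop (𝓝 z₀) := by
    intro z hz
    have hb : ∀ k, ‖q^[k] z - z₀‖ ≤ lam ^ k * ‖z - z₀‖ := by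
      intro k
      induction k with
      | zero => simp
      | succ k ih =>
        rw [Function.iterate_succ_apply']
        have hmem : q^[k] z ∈ Metric.ball z₀ r := by
          rw [mem_ball_iff_norm] at hz ⊢
          refine lt_of_le_of_lt ih (lt_of_le_of_lt ?_ hz)
          exact mul_le_of_le_one_left (norm_nonneg _) (pow_le_one₀ hlam hl2.le)
        refine (hball _ hmem).trans ?_
        rw [pow_succ', mul_assoc]
        exact mul_le_mul_of_nonneg_left ih hlam
    rw [tendsto_iff_norm_sub_tendsto_zero]
    refine squeeze_zero (fun _ => norm_nonneg _) hb ?_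
    simpa using (tendsto_pow_atTop_nhds_zero_of_lt_one hlam hl2).mul_const ‖z - z₀‖
  have hle : ∀ k, r ≤ M * ‖Q.derivative.eval z₀‖ ^ k := by
    intro k
    have := hM z₀ k r hr (by rw [hiter]; exact hconv)
    simpa [hiter] using this
  have hlim : Tendsto (fun k => M * ‖Q.derivative.eval z₀‖ ^ k) atTop (𝓝 (M * 0)) :=
    (tendsto_pow_atTop_nhds_zero_of_lt_one (norm_nonneg _) hlt).const_mul M
  have := ge_of_tendsto' hlim hle
  linarith


lemma ks_slope (m : ℕ) : Tendsto (fun s : ℂ => (((1 + s) ^ m)⁻¹ - 1) / s) (𝓝[≠] 0) (𝓝 (-(m:ℂ))) := by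
  have h : HasDerivAt (fun s : ℂ => ((1 + s) ^ m)⁻¹) (-(m:ℂ)) 0 := by
    have h1 : HasDerivAt (fun s : ℂ => (1 + s)) 1 0 := (hasDerivAt_id (0:ℂ)).const_add 1
    have h2 := (h1.pow m).inv (by simp)
    refine HasDerivAt.congr_deriv (f := fun s : ℂ => ((1 + s) ^ m)⁻¹) h2 ?_
    simp
  have := h.tendsto_slope
  refine this.congr fun s => ?_
  simp [slope_def_field]

/-- Local estimates at a parabolic point. -/
lemma ks_local (Q R : ℂ[X]) (z₀ : ℂ) (m : ℕ) (hm : 0 < m)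
    (hQR : Q - X = (X - C z₀) ^ (m + 1) * R) (a : ℂ) (haR : R.eval z₀ = a) (ha : a ≠ 0) :
    let ζ : ℂ → ℂ := fun z => (-a * (z - z₀) ^ m)⁻¹
    ∃ T : ℂ → ℂ, ∃ δ > 0, ∀ z, z ≠ z₀ → ‖z - z₀‖ < δ →
      Q.eval z ≠ z₀ ∧ ‖ζ (Q.eval z) - ζ z - m‖ ≤ m / 4 ∧
      Q.derivative.eval z * (z - z₀) = T z * (Q.eval z - z₀) ∧
      ‖(T z) ^ 2 * ζ (Q.eval z) - ζ z + m‖ ≤ m / 4 := by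
  intro ζ
  let s : ℂ → ℂ := fun z => (z - z₀) ^ m * R.eval z
  have hQ : ∀ z, Q.eval z - z₀ = (z - z₀) * (1 + s z) := by
    intro z
    have := congrArg (eval z) hQR
    simp at this
    simp only [s]
    linear_combination this
  have hQ' : ∀ z, Q.derivative.eval z = 1 + (m + 1) * s z + (z - z₀) ^ (m + 1) * R.derivative.eval z := by
    intro z
    have := congrArg (fun P => eval z (derivative P)) hQR
    simp [derivative_pow] at this
    simp only [s]
    linear_combination this
  have hRc : Tendsto (fun z => R.eval z) (𝓝[≠] z₀) (𝓝 a) :=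
    haR ▸ R.continuous.continuousAt.tendsto.mono_left nhdsWithin_le_nhds
  have hR'c : Tendsto (fun z => R.derivative.eval z) (𝓝[≠] z₀) (𝓝 (R.derivative.eval z₀)) :=
    R.derivative.continuous.continuousAt.tendsto.mono_left nhdsWithin_le_nhds
  have huc : Tendsto (fun z : ℂ => z - z₀) (𝓝[≠] z₀) (𝓝 0) := by
    have : Tendsto (fun z : ℂ => z - z₀) (𝓝 z₀) (𝓝 (z₀ - z₀)) :=
      (continuous_id.sub continuous_const).continuousAt.tendsto
    rw [sub_self] at this
    exact this.mono_left nhdsWithin_le_nhds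
  have hR0 : ∀ᶠ z in 𝓝[≠] z₀, R.eval z ≠ 0 := hRc.eventually_ne ha
  have hne : ∀ᶠ z in 𝓝[≠] z₀, z ≠ z₀ := eventually_mem_nhdsWithin
  have hs0 : Tendsto s (𝓝[≠] z₀) (𝓝 0) := by
    have := (huc.pow m).mul hRc
    simpa [hm.ne'] using this
  have hs : Tendsto s (𝓝[≠] z₀) (𝓝[≠] 0) := by
    refine tendsto_nhdsWithin_of_tendsto_nhds_of_eventually_within _ hs0 ?_
    filter_upwards [hR0, hne] with z h1 h2
    exact mul_ne_zero (pow_ne_zero _ (sub_ne_zero.mpr h2)) h1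
  have h1s : Tendsto (fun z => 1 + s z) (𝓝[≠] z₀) (𝓝 1) := by
    simpa using hs0.const_add 1
  have h1s0 : ∀ᶠ z in 𝓝[≠] z₀, 1 + s z ≠ 0 := h1s.eventually_ne one_ne_zero
  have hsl := (ks_slope m).comp hs
  -- κ
  let κ : ℂ → ℂ := fun z => (m + (z - z₀) * R.derivative.eval z / R.eval z) / (1 + s z)
  have hκ : Tendsto κ (𝓝[≠] z₀) (𝓝 m) := by
    have := (((huc.mul hR'c).div hRc ha).const_add (m:ℂ)).div h1s one_ne_zero
    have e : ((m:ℂ) + 0 * R.derivative.eval z₀ / a) / 1 = m := by simp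
    rw [e] at this
    exact this
  let T : ℂ → ℂ := fun z => 1 + s z * κ z
  have hL1 : Tendsto (fun z => ζ (Q.eval z) - ζ z - m) (𝓝[≠] z₀) (𝓝 0) := by
    have h := ((hsl.mul (hRc.div_const (-a))).sub_const (m:ℂ))
    have e : -(m:ℂ) * (a / -a) - m = 0 := by field_simp; ring
    rw [e] at h
    refine h.congr' ?_
    filter_upwards [hR0, hne, h1s0] with z hz1 hz2 hz3
    have hz2' : z - z₀ ≠ 0 := sub_ne_zero.mpr hz2
    have hsR : s z = (z - z₀) ^ m * R.eval z := rfl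
    simp only [ζ, Function.comp, hQ, mul_pow]
    have : R.eval z = s z / (z - z₀) ^ m := by rw [hsR]; field_simp
    have hs1 : s z ≠ 0 := by rw [hsR]; exact mul_ne_zero (pow_ne_zero _ hz2') hz1
    rw [this]
    field_simp
    ring
  have hL2 : Tendsto (fun z => (T z) ^ 2 * ζ (Q.eval z) - ζ z + m) (𝓝[≠] z₀) (𝓝 0) := by
    have hinv : Tendsto (fun z => ((1 + s z) ^ m)⁻¹) (𝓝[≠] z₀) (𝓝 1) := by
      simpa using (h1s.pow m).inv₀ (by simp)
    have h := (((((hκ.const_mul 2).add (hs0.mul (hκ.pow 2))).mul hinv).add hsl).mul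
      (hRc.div_const (-a))).add_const (m:ℂ)
    have e : ((2 * (m:ℂ) + 0 * m ^ 2) * 1 + -(m:ℂ)) * (a / -a) + m = 0 := by field_simp; ring
    rw [e] at h
    refine h.congr' ?_
    filter_upwards [hR0, hne, h1s0] with z hz1 hz2 hz3
    have hz2' : z - z₀ ≠ 0 := sub_ne_zero.mpr hz2
    have hsR : s z = (z - z₀) ^ m * R.eval z := rfl
    simp only [ζ, Function.comp, hQ, mul_pow, T]
    have : R.eval z = s z / (z - z₀) ^ m := by rw [hsR]; field_simp
    have hs1 : s z ≠ 0 := by rw [hsR]; exact mul_ne_zero (pow_ne_zero _ hz2') hz1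
    rw [this]
    generalize κ z = k
    field_simp
    ring
  have hm' : (0:ℝ) < m / 4 := by positivity
  have hE1 := hL1.norm.eventually_le_const (u := (m:ℝ)/4) (by rw [norm_zero]; exact hm')
  have hE2 := hL2.norm.eventually_le_const (u := (m:ℝ)/4) (by rw [norm_zero]; exact hm')
  have hall := (hE1.and hE2).and (hR0.and h1s0)
  rw [eventually_nhdsWithin_iff, Metric.eventually_nhds_iff_ball] at hall
  obtain ⟨δ, hδ, hall⟩ := hall
  refine ⟨T, δ, hδ, fun z hz hzd => ?_⟩
  obtain ⟨⟨h1, h2⟩, h3, h4⟩ := hall z (by rwa [mem_ball_iff_norm]) hz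
  have hz' : z - z₀ ≠ 0 := sub_ne_zero.mpr hz
  refine ⟨?_, h1, ?_, h2⟩
  · rw [← sub_ne_zero, hQ]; exact mul_ne_zero hz' h4
  · rw [hQ, hQ']
    have hsR : s z = (z - z₀) ^ m * R.eval z := rfl
    have e : (z - z₀) ^ (m + 1) * R.derivative.eval z =
        s z * ((z - z₀) * R.derivative.eval z / R.eval z) := by
      rw [hsR]; field_simp; ring
    rw [e]
    simp only [T, κ]
    field_simp
    ring


lemma ks_factor (Q : ℂ[X]) (hQ : 1 < Q.natDegree) (z₀ : ℂ) (hfix : Q.eval z₀ = z₀)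
    (h1 : Q.derivative.eval z₀ = 1) :
    ∃ (m : ℕ) (R : ℂ[X]), 0 < m ∧ Q - X = (X - C z₀) ^ (m + 1) * R ∧ R.eval z₀ ≠ 0 := by
  have hne : Q - X ≠ 0 := by
    intro h
    rw [sub_eq_zero] at h
    rw [h, natDegree_X] at hQ
    exact lt_irrefl _ hQ
  obtain ⟨R, hR, hnd⟩ := exists_eq_pow_rootMultiplicity_mul_and_not_dvd (Q - X) hne z₀
  generalize rootMultiplicity z₀ (Q - X) = M at hR
  have hR0 : R.eval z₀ ≠ 0 := by
    intro h; exact hnd (dvd_iff_isRoot.mpr h)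
  match M, hR with
  | 0, hR =>
    exfalso
    have := congrArg (eval z₀) hR
    simp [hfix] at this
    exact hR0 this.symm
  | 1, hR =>
    exfalso
    have := congrArg (fun P => eval z₀ (derivative P)) hR
    simp [h1] at this
    exact hR0 this.symm
  | m + 2, hR => exact ⟨m + 1, R, by omega, hR, hR0⟩

lemma ks_sector (m : ℝ) (hm : 0 < m) (ζ w : ℂ) (h1 : |ζ.im| ≤ ζ.re) (h2 : 2 * m ≤ ζ.re)
    (h : ‖w - ζ + m‖ ≤ m / 4) : ‖w‖ ≤ ‖ζ‖ := by
  set e := w - ζ + m with he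
  have hw : w = ζ - m + e := by rw [he]; ring
  have hre := (abs_re_le_norm e).trans h
  have him := (abs_im_le_norm e).trans h
  rw [abs_le] at hre him h1
  rw [← sq_le_sq₀ (norm_nonneg _) (norm_nonneg _), Complex.sq_norm, Complex.sq_norm,
    Complex.normSq_apply, Complex.normSq_apply, hw]
  simp only [add_re, sub_re, ofReal_re, add_im, sub_im, ofReal_im, sub_zero]
  generalize e.re = a at *
  generalize e.im = b at *
  generalize ζ.re = x at *
  generalize ζ.im = y at *
  -- (x - m + a)^2 + (y+b)^2 ≤ x^2 + y^2
  have e1 : 2 * y * b ≤ 2 * x * (m / 4) := by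
    rcases le_total 0 b with hb | hb <;> nlinarith
  have e2 : b ^ 2 ≤ (m / 4) ^ 2 := by nlinarith
  nlinarith [mul_nonneg (by linarith : 0 ≤ x - 2 * m) (by linarith : 0 ≤ (m / 4 - a)),
    mul_nonneg (by linarith : 0 ≤ x - 2 * m) hm.le]

lemma ks_para (Q : ℂ[X]) (hQ : 1 < Q.natDegree) (z₀ : ℂ) (hfix : Q.eval z₀ = z₀)
    (h1 : Q.derivative.eval z₀ = 1) :
    ∃ c, Q.derivative.eval c = 0 ∧
      Tendsto (fun k => (fun x => Q.eval x)^[k] c) atTop (𝓝 z₀) := by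
  by_contra! hcon
  obtain ⟨M, hM0, hM⟩ := ks_core Q hQ z₀ hcon
  obtain ⟨m, R, hm, hQR, ha⟩ := ks_factor Q hQ z₀ hfix h1
  obtain ⟨a, haR⟩ : ∃ a, R.eval z₀ = a := ⟨_, rfl⟩
  rw [haR] at ha
  obtain ⟨T, δ, hδ, hloc⟩ := ks_local Q R z₀ m hm hQR a haR ha
  set ζ : ℂ → ℂ := fun z => (-a * (z - z₀) ^ m)⁻¹ with hζ
  set q : ℂ → ℂ := fun x => Q.eval x with hq
  have hmR : (0:ℝ) < m := by exact_mod_cast hm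
  have ha' : 0 < ‖a‖ := norm_pos_iff.mpr ha
  have hζn : ∀ z, ‖ζ z‖ = (‖a‖ * ‖z - z₀‖ ^ m)⁻¹ := by
    intro z; simp [hζ]
  -- small disc from large ζ
  have hsmall : ∀ ε > 0, ∀ z, (‖a‖ * ε ^ m)⁻¹ < ‖ζ z‖ → ‖z - z₀‖ < ε := by
    intro ε hε z hz
    by_contra! hle
    rw [hζn] at hz
    refine absurd hz (not_lt.mpr ?_)
    gcongr
  obtain ⟨R0, hR01, hR02⟩ : ∃ R0 : ℝ, (‖a‖ * δ ^ m)⁻¹ ≤ R0 ∧ 2 * m ≤ R0 :=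
    ⟨max _ _, le_max_left _ _, le_max_right _ _⟩
  have hR0pos : 0 < R0 := by linarith
  have hin : ∀ z, R0 < (ζ z).re → z ≠ z₀ ∧ ‖z - z₀‖ < δ := by
    intro z hz
    refine ⟨?_, hsmall δ hδ z (lt_of_le_of_lt hR01 (lt_of_lt_of_le hz ((le_abs_self _).trans (abs_re_le_norm _))))⟩
    rintro rfl
    simp [hζ, hm.ne'] at hz
    linarith
  have hstep : ∀ z, R0 < (ζ z).re → (ζ z).re + m / 2 ≤ (ζ (q z)).re ∧
      |(ζ (q z)).im| ≤ |(ζ z).im| + m / 4 := by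
    intro z hz
    obtain ⟨hz1, hz2⟩ := hin z hz
    obtain ⟨-, h2, -, -⟩ := hloc z hz1 hz2
    have hre := (abs_re_le_norm _).trans h2
    have him := (abs_im_le_norm _).trans h2
    simp only [sub_re, sub_im, natCast_re, natCast_im, sub_zero] at hre him
    rw [abs_le] at hre
    have h3 := abs_sub_abs_le_abs_sub (ζ (q z)).im (ζ z).im
    constructor
    · have := hre.1
      change _ ≤ (ζ (q z)).re - _ - _ at this
      linarith
    · change |(ζ (q z)).im - _| ≤ _ at him
      linarith
  have hgrow : ∀ z, R0 < (ζ z).re → ∀ k, (ζ z).re + k * (m / 2) ≤ (ζ (q^[k] z)).re := by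
    intro z hz k
    induction k with
    | zero => simp
    | succ k ih =>
      rw [Function.iterate_succ_apply']
      have hk : (0:ℝ) ≤ k * (m / 2) := by positivity
      have := (hstep (q^[k] z) (by linarith)).1
      push_cast
      linarith
  have hlin : ∀ b : ℝ, Tendsto (fun k : ℕ => b + k * ((m:ℝ) / 2)) atTop atTop := by
    intro b
    exact tendsto_atTop_add_const_left _ _ (tendsto_natCast_atTop_atTop.atTop_mul_const (by positivity))
  have hconv : ∀ z, R0 < (ζ z).re → Tendsto (fun k => q^[k] z) atTop (𝓝 z₀) := by
    intro z hz
    rw [Metric.tendsto_atTop']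
    intro ε hε
    obtain ⟨N, hN⟩ := ((hlin (ζ z).re).eventually_gt_atTop ((‖a‖ * ε ^ m)⁻¹)).exists_forall_of_atTop
    refine ⟨N, fun k hk => ?_⟩
    rw [dist_eq_norm]
    refine hsmall ε hε _ (lt_of_lt_of_le (hN k hk.le) ((hgrow z hz k).trans
      ((le_abs_self _).trans (abs_re_le_norm _))))
  -- base point
  obtain ⟨u, hu⟩ := IsAlgClosed.exists_pow_nat_eq (-(a * ((2 * R0 + 1 : ℝ) : ℂ))⁻¹) hm
  have hζ0 : ζ (z₀ + u) = ((2 * R0 + 1 : ℝ) : ℂ) := by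
    simp only [hζ, add_sub_cancel_left, hu]
    have : ((2 * R0 + 1 : ℝ) : ℂ) ≠ 0 := by
      rw [Complex.ofReal_ne_zero]; positivity
    field_simp
  set x₀ := z₀ + u with hx0
  have hx0R : R0 < (ζ x₀).re := by rw [hζ0, ofReal_re]; linarith
  have hx0R2 : 2 * R0 < (ζ x₀).re := by rw [hζ0, ofReal_re]; linarith
  have hsec : ∀ k, |(ζ (q^[k] x₀)).im| ≤ (ζ (q^[k] x₀)).re := by
    intro k
    induction k with
    | zero =>
      simp only [Function.iterate_zero, id]
      rw [hζ0, ofReal_re, ofReal_im, abs_zero]; positivity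
    | succ k ih =>
      rw [Function.iterate_succ_apply']
      have hk : (0:ℝ) ≤ k * (m / 2) := by positivity
      have h3 := hgrow x₀ hx0R k
      obtain ⟨h4, h5⟩ := hstep (q^[k] x₀) (by linarith)
      linarith
  have hbig : ∀ k, 2 * R0 < (ζ (q^[k] x₀)).re := by
    intro k
    have hk : (0:ℝ) ≤ k * (m / 2) := by positivity
    have h3 := hgrow x₀ hx0R k
    linarith
  -- epsilon
  obtain ⟨ε, hε, hεw⟩ : ∃ ε > 0, ∀ w : ℂ, ‖w - 1‖ < ε → ‖(w ^ m)⁻¹ - 1‖ < 1 / 4 := by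
    have hc : ContinuousAt (fun w : ℂ => (w ^ m)⁻¹) 1 := by
      apply ContinuousAt.inv₀ (by fun_prop) (by simp)
    rw [Metric.continuousAt_iff] at hc
    obtain ⟨ε, hε, h⟩ := hc (1/4) (by norm_num)
    refine ⟨ε, hε, fun w hw => ?_⟩
    have := h (x := w) (by rwa [dist_eq_norm])
    simpa [dist_eq_norm] using this
  have hball : ∀ k, ∀ z ∈ Metric.ball (q^[k] x₀) (ε * ‖q^[k] x₀ - z₀‖), R0 < (ζ z).re := by
    intro k z hz
    have hk1 := hbig k
    have hk2 := hsec k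
    obtain ⟨hk3, -⟩ := hin (q^[k] x₀) (by linarith)
    generalize q^[k] x₀ = x at *
    have hx : x - z₀ ≠ 0 := sub_ne_zero.mpr hk3
    have hxn : 0 < ‖x - z₀‖ := norm_pos_iff.mpr hx
    rw [mem_ball_iff_norm] at hz
    have h2 := hεw ((z - z₀) / (x - z₀)) (by
      have : (z - z₀) / (x - z₀) - 1 = (z - x) / (x - z₀) := by field_simp; ring
      rw [this, norm_div, div_lt_iff₀ hxn]; exact hz)
    have h3 : ζ z = ζ x * (((z - z₀) / (x - z₀)) ^ m)⁻¹ := by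
      simp only [hζ, div_pow, mul_inv, inv_div]
      field_simp
    set w := (((z - z₀) / (x - z₀)) ^ m)⁻¹
    have h4 : ‖ζ z - ζ x‖ ≤ ‖ζ x‖ * (1 / 4) := by
      rw [h3, ← mul_sub_one, norm_mul]
      gcongr
    have h5 := (abs_re_le_norm _).trans h4
    rw [abs_le, sub_re] at h5
    have h6 := norm_le_abs_re_add_abs_im (ζ x)
    rw [abs_of_pos (by linarith : 0 < (ζ x).re)] at h6
    linarith [h5.1]
  have hMk : ∀ k, ε * ‖q^[k] x₀ - z₀‖ ≤ M * ‖∏ j ∈ Finset.range k, Q.derivative.eval (q^[j] x₀)‖ := by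
    intro k
    have hk1 := hbig k
    obtain ⟨hk3, -⟩ := hin (q^[k] x₀) (by linarith)
    exact hM x₀ k _ (mul_pos hε (norm_pos_iff.mpr (sub_ne_zero.mpr hk3)))
      (fun z hz => hconv z (hball k z hz))
  -- potential
  let D : ℕ → ℂ := fun k => ∏ j ∈ Finset.range k, Q.derivative.eval (q^[j] x₀)
  have hY : ∀ k, ‖(D k / (q^[k] x₀ - z₀)) ^ 2 * ζ (q^[k] x₀)‖ ≤ ‖(D 0 / (x₀ - z₀)) ^ 2 * ζ x₀‖ := by
    intro k
    induction k with
    | zero => simp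
    | succ k ih =>
      refine le_trans ?_ ih
      have hk1 := hbig k
      have hk2 := hsec k
      obtain ⟨hk3, hk4⟩ := hin (q^[k] x₀) (by linarith)
      have hD : D (k + 1) = D k * Q.derivative.eval (q^[k] x₀) := Finset.prod_range_succ _ _
      rw [Function.iterate_succ_apply', hD]
      generalize q^[k] x₀ = x at *
      obtain ⟨g1, -, g3, g4⟩ := hloc x hk3 hk4
      have hx : x - z₀ ≠ 0 := sub_ne_zero.mpr hk3
      have hqx : q x - z₀ ≠ 0 := sub_ne_zero.mpr g1
      have e : D k * Q.derivative.eval x / (q x - z₀) = D k / (x - z₀) * T x := by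
        field_simp
        linear_combination D k * g3
      rw [e, mul_pow, mul_assoc, norm_mul, norm_mul ((D k / (x - z₀)) ^ 2) (ζ x)]
      refine mul_le_mul_of_nonneg_left ?_ (norm_nonneg _)
      exact ks_sector m hmR (ζ x) _ hk2 (by linarith) (by exact_mod_cast g4)
  have hub : ∀ k, ‖ζ (q^[k] x₀)‖ ≤ (M / ε) ^ 2 * ‖(D 0 / (x₀ - z₀)) ^ 2 * ζ x₀‖ := by
    intro k
    have hk1 := hbig k
    obtain ⟨hk3, hk4⟩ := hin (q^[k] x₀) (by linarith)
    have hxn : 0 < ‖q^[k] x₀ - z₀‖ := norm_pos_iff.mpr (sub_ne_zero.mpr hk3)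
    have h3 : 1 ≤ (M / ε) ^ 2 * ‖D k / (q^[k] x₀ - z₀)‖ ^ 2 := by
      rw [← mul_pow]
      apply one_le_pow₀
      rw [norm_div, div_mul_div_comm, one_le_div (by positivity)]
      exact hMk k
    have h4 := hY k
    rw [norm_mul, norm_pow] at h4
    calc ‖ζ (q^[k] x₀)‖ ≤ ((M / ε) ^ 2 * ‖D k / (q^[k] x₀ - z₀)‖ ^ 2) * ‖ζ (q^[k] x₀)‖ :=
          le_mul_of_one_le_left (norm_nonneg _) h3
      _ = (M / ε) ^ 2 * (‖D k / (q^[k] x₀ - z₀)‖ ^ 2 * ‖ζ (q^[k] x₀)‖) := by ring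
      _ ≤ _ := by gcongr
  obtain ⟨k, hk⟩ := ((hlin (ζ x₀).re).eventually_gt_atTop
    ((M / ε) ^ 2 * ‖(D 0 / (x₀ - z₀)) ^ 2 * ζ x₀‖)).exists
  have h3 := hgrow x₀ hx0R k
  have h4 := (le_abs_self _).trans (abs_re_le_norm (ζ (q^[k] x₀)))
  linarith [hub k]

lemma ks_count_aux (p : ℂ[X]) (hp : 1 < p.natDegree) (z₀ : ℂ)
    (hz : (starRingEnd ℂ) (p.eval z₀) = z₀) (hle : ‖p.derivative.eval z₀‖ ≤ 1) :
    ∃ c, p.derivative.eval c = 0 ∧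
      Tendsto (fun k => (fun x => ((p.map (starRingEnd ℂ)).comp p).eval x)^[k] c) atTop (𝓝 z₀) := by
  set Q := (p.map (starRingEnd ℂ)).comp p with hQ
  have hmap : ∀ (f : ℂ[X]) (z : ℂ), (f.map (starRingEnd ℂ)).eval z = (starRingEnd ℂ) (f.eval ((starRingEnd ℂ) z)) := by
    intro f z
    have := Polynomial.eval_map_apply (p := f) (starRingEnd ℂ) ((starRingEnd ℂ) z)
    simpa using this
  have hQe : ∀ z, Q.eval z = (starRingEnd ℂ) (p.eval ((starRingEnd ℂ) (p.eval z))) := by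
    intro z; rw [hQ, eval_comp, hmap]
  have hQd : ∀ z, Q.derivative.eval z =
      p.derivative.eval z * (starRingEnd ℂ) (p.derivative.eval ((starRingEnd ℂ) (p.eval z))) := by
    intro z; rw [hQ, derivative_comp, eval_mul, eval_comp, derivative_map, hmap]
  have hdeg : 1 < Q.natDegree := by
    rw [hQ, natDegree_comp, natDegree_map]
    nlinarith
  have hfix : Q.eval z₀ = z₀ := by rw [hQe, hz, hz]
  have hd0 : Q.derivative.eval z₀ = ((‖p.derivative.eval z₀‖ ^ 2 : ℝ) : ℂ) := by
    rw [hQd, hz, Complex.mul_conj, Complex.normSq_eq_norm_sq]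
  obtain ⟨c, hc, hlim⟩ : ∃ c, Q.derivative.eval c = 0 ∧
      Tendsto (fun k => (fun x => Q.eval x)^[k] c) atTop (𝓝 z₀) := by
    rcases hle.lt_or_eq with h | h
    · apply ks_attr Q hdeg z₀ hfix
      rw [hd0, Complex.norm_real, Real.norm_of_nonneg (by positivity)]
      exact pow_lt_one₀ (norm_nonneg _) h two_ne_zero
    · apply ks_para Q hdeg z₀ hfix
      rw [hd0, h]; simp
  rw [hQd, mul_eq_zero] at hc
  rcases hc with hc | hc
  · exact ⟨c, hc, hlim⟩
  · refine ⟨(starRingEnd ℂ) (p.eval c), by simpa using hc, ?_⟩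
    have hcont : Continuous (fun z => (starRingEnd ℂ) (p.eval z)) :=
      Complex.continuous_conj.comp p.continuous
    have h2 := (hcont.tendsto z₀).comp hlim
    rw [hz] at h2
    refine h2.congr fun k => ?_
    have hcomm : Function.Commute (fun z => (starRingEnd ℂ) (p.eval z)) (fun x => Q.eval x) := by
      intro z
      simp only [hQe]
    exact (hcomm.iterate_right k) c

lemma ks_count (p : ℂ[X]) (hp : 1 < p.natDegree) (S : Finset ℂ)
    (hS : ∀ z ∈ S, (starRingEnd ℂ) (p.eval z) = z ∧ ‖p.derivative.eval z‖ ≤ 1) :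
    S.card ≤ p.natDegree - 1 := by
  classical
  choose! c hc using fun z (hz : z ∈ S) => ks_count_aux p hp z (hS z hz).1 (hS z hz).2
  have hd : p.derivative ≠ 0 := by
    intro h
    have := natDegree_eq_zero_of_derivative_eq_zero h
    omega
  calc S.card ≤ p.derivative.roots.toFinset.card := by
        apply Finset.card_le_card_of_injOn c
        · intro z hz
          simp only [Finset.mem_coe, Multiset.mem_toFinset]
          rw [mem_roots hd]; exact (hc z hz).1
        · intro z hz w hw hzw
          have h1 := (hc z hz).2
          rw [hzw] at h1
          exact tendsto_nhds_unique h1 (hc w hw).2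
    _ ≤ Multiset.card p.derivative.roots := Multiset.toFinset_card_le _
    _ ≤ p.derivative.natDegree := card_roots' _
    _ ≤ p.natDegree - 1 := natDegree_derivative_le p

end ksA

section ksB
open Complex Polynomial


noncomputable def ksg (p f : ℂ[X]) : ℂ[X] := (f.map (starRingEnd ℂ)).comp p
noncomputable def ksF (p : ℂ[X]) : ℂ[X] := (p.map (starRingEnd ℂ)).comp p - X
noncomputable def ksFm (p : ℂ[X]) : ℂ[X] := ksF p * C (ksF p).leadingCoeff⁻¹
noncomputable def ksphi (p : ℂ[X]) : ℂ[X] →ₗ[ℂ] ℂ :=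
  (lcoeff ℂ (p.natDegree ^ 2 - 1)) ∘ₗ (modByMonicHom (ksFm p))

lemma ks_map_eval (f : ℂ[X]) (z : ℂ) :
    (f.map (starRingEnd ℂ)).eval z = (starRingEnd ℂ) (f.eval ((starRingEnd ℂ) z)) := by
  have := Polynomial.eval_map_apply (p := f) (starRingEnd ℂ) ((starRingEnd ℂ) z)
  simpa using this

lemma ksg_eval (p f : ℂ[X]) (z : ℂ) :
    (ksg p f).eval z = (starRingEnd ℂ) (f.eval ((starRingEnd ℂ) (p.eval z))) := by
  rw [ksg, eval_comp, ks_map_eval]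

lemma ksg_add (p f g : ℂ[X]) : ksg p (f + g) = ksg p f + ksg p g := by simp [ksg]
lemma ksg_sub (p f g : ℂ[X]) : ksg p (f - g) = ksg p f - ksg p g := by simp [ksg]
lemma ksg_mul (p f g : ℂ[X]) : ksg p (f * g) = ksg p f * ksg p g := by simp [ksg]
lemma ksg_pow (p f : ℂ[X]) (k : ℕ) : ksg p (f ^ k) = ksg p f ^ k := by simp [ksg]
lemma ksg_smul (p f : ℂ[X]) (c : ℂ) : ksg p (c • f) = (starRingEnd ℂ c) • ksg p f := by
  simp [ksg, smul_eq_C_mul]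
lemma ksg_zero (p : ℂ[X]) : ksg p 0 = 0 := by simp [ksg]
lemma ksg_prod {ι : Type*} (p : ℂ[X]) (s : Finset ι) (f : ι → ℂ[X]) :
    ksg p (∏ i ∈ s, f i) = ∏ i ∈ s, ksg p (f i) := by
  simp [ksg, Polynomial.map_prod, Polynomial.prod_comp]
lemma ksg_dvd (p f g : ℂ[X]) (h : f ∣ g) : ksg p f ∣ ksg p g := by
  obtain ⟨k, rfl⟩ := h
  rw [ksg_mul]; exact dvd_mul_right _ _

lemma ks_comp_sub_dvd (f a b : ℂ[X]) : a - b ∣ f.comp a - f.comp b := by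
  have := Polynomial.sub_dvd_eval_sub a b (f.map C)
  simpa [eval_map, comp] using this

lemma ks_map_conj_conj (f : ℂ[X]) : (f.map (starRingEnd ℂ)).map (starRingEnd ℂ) = f := by
  ext i; simp

lemma ksF_dvd_ksgF (p : ℂ[X]) : ksF p ∣ ksg p (ksF p) := by
  have : ksg p (ksF p) = p.comp ((p.map (starRingEnd ℂ)).comp p) - p.comp X := by
    simp only [ksg, ksF, Polynomial.map_sub, map_comp, ks_map_conj_conj, map_X, sub_comp, X_comp,
      comp_X, comp_assoc]
  rw [this]
  exact ks_comp_sub_dvd _ _ _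

lemma ksF_dvd_ksg (p f : ℂ[X]) (h : ksF p ∣ f) : ksF p ∣ ksg p f :=
  (ksF_dvd_ksgF p).trans (ksg_dvd p _ _ h)

lemma ksF_dvd_ksgg (p f : ℂ[X]) : ksF p ∣ ksg p (ksg p f) - f := by
  have : ksg p (ksg p f) - f = f.comp ((p.map (starRingEnd ℂ)).comp p) - f.comp X := by
    simp only [ksg, map_comp, ks_map_conj_conj, comp_X, comp_assoc]
  rw [this]
  exact ks_comp_sub_dvd _ _ _

lemma ksF_natDegree (p : ℂ[X]) (hp : 1 < p.natDegree) : (ksF p).natDegree = p.natDegree ^ 2 := by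
  rw [ksF, natDegree_sub_eq_left_of_natDegree_lt]
  · rw [natDegree_comp, natDegree_map, sq]
  · rw [natDegree_comp, natDegree_map, natDegree_X]; nlinarith

lemma ksF_ne_zero (p : ℂ[X]) (hp : 1 < p.natDegree) : ksF p ≠ 0 := by
  intro h
  have := ksF_natDegree p hp
  rw [h, natDegree_zero] at this
  have : 0 < p.natDegree ^ 2 := by positivity
  omega

lemma ksFm_monic (p : ℂ[X]) (hp : 1 < p.natDegree) : (ksFm p).Monic :=
  monic_mul_leadingCoeff_inv (ksF_ne_zero p hp)

lemma ksFm_natDegree (p : ℂ[X]) (hp : 1 < p.natDegree) : (ksFm p).natDegree = p.natDegree ^ 2 := by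
  rw [ksFm, natDegree_mul_leadingCoeff_inv _ (ksF_ne_zero p hp), ksF_natDegree p hp]

lemma ksFm_dvd_iff (p : ℂ[X]) (hp : 1 < p.natDegree) (f : ℂ[X]) : ksFm p ∣ f ↔ ksF p ∣ f := by
  rw [ksFm]
  apply IsUnit.mul_right_dvd
  rw [isUnit_C]
  simpa using ksF_ne_zero p hp

lemma ksphi_apply (p f : ℂ[X]) : ksphi p f = (f %ₘ ksFm p).coeff (p.natDegree ^ 2 - 1) := rfl

lemma ksphi_dvd (p : ℂ[X]) (hp : 1 < p.natDegree) (f : ℂ[X]) (h : ksF p ∣ f) : ksphi p f = 0 := by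
  rw [← ksFm_dvd_iff p hp, ← modByMonic_eq_zero_iff_dvd (ksFm_monic p hp)] at h
  rw [ksphi_apply, h, coeff_zero]

lemma ksphi_congr (p : ℂ[X]) (hp : 1 < p.natDegree) (f g : ℂ[X]) (h : ksF p ∣ f - g) :
    ksphi p f = ksphi p g := by
  rw [← sub_eq_zero, ← map_sub]; exact ksphi_dvd p hp _ h

lemma ks_mod_self (p : ℂ[X]) (hp : 1 < p.natDegree) (f : ℂ[X]) (h : f.natDegree < p.natDegree ^ 2) :
    f %ₘ ksFm p = f := by
  rw [modByMonic_eq_self_iff (ksFm_monic p hp)]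
  apply degree_lt_degree
  rw [ksFm_natDegree p hp]; exact h

lemma ksphi_low (p : ℂ[X]) (hp : 1 < p.natDegree) (f : ℂ[X])
    (h : f.natDegree < p.natDegree ^ 2 - 1) : ksphi p f = 0 := by
  rw [ksphi_apply, ks_mod_self p hp f (by omega)]
  exact coeff_eq_zero_of_natDegree_lt h

lemma ksphi_nondeg (p : ℂ[X]) (hp : 1 < p.natDegree) (f : ℂ[X])
    (h : ∀ g, ksphi p (f * g) = 0) : ksF p ∣ f := by
  rw [← ksFm_dvd_iff p hp, ← modByMonic_eq_zero_iff_dvd (ksFm_monic p hp)]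
  by_contra hr
  set r := f %ₘ ksFm p with hrdef
  have hdeg : r.natDegree < p.natDegree ^ 2 := by
    have := natDegree_modByMonic_lt f (ksFm_monic p hp) (by
      intro h1
      have h2 := ksFm_natDegree p hp
      rw [h1, natDegree_one] at h2
      have : 0 < p.natDegree ^ 2 := by positivity
      omega)
    rwa [ksFm_natDegree p hp] at this
  have h1 := h (X ^ (p.natDegree ^ 2 - 1 - r.natDegree))
  have h2 : ksphi p (f * X ^ (p.natDegree ^ 2 - 1 - r.natDegree)) =
      ksphi p (r * X ^ (p.natDegree ^ 2 - 1 - r.natDegree)) := by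
    apply ksphi_congr p hp
    rw [← sub_mul]
    apply Dvd.dvd.mul_right
    rw [← ksFm_dvd_iff p hp]
    refine ⟨f /ₘ ksFm p, ?_⟩
    have := modByMonic_add_div f (ksFm p)
    linear_combination -this
  rw [h2, ksphi_apply, ks_mod_self p hp _ (by rw [natDegree_mul_X_pow _ hr]; omega),
    coeff_mul_X_pow', if_pos (by omega)] at h1
  rw [show p.natDegree ^ 2 - 1 - (p.natDegree ^ 2 - 1 - r.natDegree) = r.natDegree by omega] at h1
  exact hr (leadingCoeff_eq_zero.mp h1)

lemma ksphi_monomial (p : ℂ[X]) (hp : 1 < p.natDegree) (b : ℕ) :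
    ∀ a, a + b + 4 ≤ 2 * p.natDegree → ksphi p (X ^ a * p ^ b) = 0 := by
  induction b using Nat.strong_induction_on with
  | _ b ih =>
  intro a hab
  set n := p.natDegree with hn
  rcases lt_or_ge b n with hb | hb
  · apply ksphi_low p hp
    refine lt_of_le_of_lt natDegree_mul_le ?_
    rw [natDegree_X_pow, natDegree_pow, ← hn]
    have : a + b * n + 1 < n ^ 2 := by
      obtain ⟨c, hc⟩ : ∃ c, n = b + 1 + c := ⟨n - (b+1), by omega⟩
      rw [hc] at hab ⊢
      nlinarith
    omega
  · obtain ⟨b', rfl⟩ : ∃ b', b = b' + n := ⟨b - n, by omega⟩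
    have hc : (starRingEnd ℂ) (p.coeff n) ≠ 0 := by
      simp only [ne_eq, map_eq_zero]
      rw [hn]
      intro h
      have := leadingCoeff_eq_zero.mp h
      rw [this, natDegree_zero] at hn
      omega
    have hsum : (p.map (starRingEnd ℂ)).comp p =
        (∑ i ∈ Finset.range n, (starRingEnd ℂ (p.coeff i)) • p ^ i) +
          (starRingEnd ℂ (p.coeff n)) • p ^ n := by
      rw [← Finset.sum_range_succ, comp, eval₂_eq_sum_range, natDegree_map]
      simp [smul_eq_C_mul, hn]
    have e : (starRingEnd ℂ (p.coeff n)) • (X ^ a * p ^ (b' + n)) =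
        X ^ (a + 1) * p ^ b' + X ^ a * p ^ b' * ksF p -
        ∑ i ∈ Finset.range n, (starRingEnd ℂ (p.coeff i)) • (X ^ a * p ^ (b' + i)) := by
      have h2 : ∑ i ∈ Finset.range n, (starRingEnd ℂ (p.coeff i)) • (X ^ a * p ^ (b' + i)) =
          X ^ a * p ^ b' * ∑ i ∈ Finset.range n, (starRingEnd ℂ (p.coeff i)) • p ^ i := by
        rw [Finset.mul_sum]
        refine Finset.sum_congr rfl fun i _ => ?_
        rw [mul_smul_comm, pow_add, mul_assoc]
      rw [h2, ksF, hsum]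
      simp only [smul_eq_C_mul]
      ring
    have h3 := congrArg (ksphi p) e
    rw [map_smul, map_sub, map_add, map_sum, ih b' (by omega) (a + 1) (by omega),
      ksphi_dvd p hp _ (dvd_mul_left _ _), Finset.sum_eq_zero] at h3
    · simpa [hc] using h3
    · intro i hi
      rw [Finset.mem_range] at hi
      rw [map_smul, ih (b' + i) (by omega) a (by omega), smul_zero]

/-- local formula -/
lemma ksphi_local (p : ℂ[X]) (hp : 1 < p.natDegree) (M h : ℂ[X]) (hM : M.Monic) (S : Finset ℂ)
    (hS : S.Nonempty) (hF : ksFm p = M * ∏ r ∈ S, (X - C r)) :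
    ksphi p (M * h) = ∑ r ∈ S, h.eval r / ∏ j ∈ S.erase r, (r - j) := by
  have hnm : (∏ r ∈ S, (X - C r)).Monic := monic_prod_X_sub_C _ _
  have hnd : (∏ r ∈ S, (X - C r)).natDegree = S.card := by
    simp
  set L := ∏ r ∈ S, (X - C r) with hL
  have hmod : (M * h) %ₘ ksFm p = M * (h %ₘ L) := by
    refine (div_modByMonic_unique (h /ₘ L) (M * (h %ₘ L)) (ksFm_monic p hp) ⟨?_, ?_⟩).2
    · rw [hF]
      have := modByMonic_add_div h L
      linear_combination M * this
    · rw [hF, degree_mul, degree_mul]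
      have := degree_modByMonic_lt h hnm
      exact WithBot.add_lt_add_left (by simpa using hM.ne_zero) this
  have hdeg : p.natDegree ^ 2 = M.natDegree + S.card := by
    rw [← ksFm_natDegree p hp, hF, hM.natDegree_mul hnm, hnd]
  have hc := hS.card_pos
  have hlt : (h %ₘ L).degree < S.card := by
    have := degree_modByMonic_lt h hnm
    rwa [degree_eq_natDegree hnm.ne_zero, hnd] at this
  have hnat : (h %ₘ L).natDegree ≤ S.card - 1 := by
    by_cases h0 : h %ₘ L = 0
    · simp [h0]
    · rw [degree_eq_natDegree h0] at hlt
      have : (h %ₘ L).natDegree < S.card := by exact_mod_cast hlt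
      omega
  rw [ksphi_apply, hmod, hdeg, show M.natDegree + S.card - 1 = M.natDegree + (S.card - 1) by omega,
    coeff_mul_add_eq_of_natDegree_le le_rfl hnat, hM.coeff_natDegree, one_mul,
    Lagrange.coeff_eq_sum (s := S) (v := id) Function.injective_id.injOn hlt]
  refine Finset.sum_congr rfl fun r hr => ?_
  simp only [id]
  congr 1
  have := congrArg (eval r) (modByMonic_add_div h L)
  rw [eval_add, eval_mul] at this
  have h0 : L.eval r = 0 := by
    rw [hL, eval_prod]; exact Finset.prod_eq_zero hr (by simp)
  rw [h0, zero_mul, add_zero] at this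
  exact this


lemma ks_linInd {ι : Type*} (f : ι → ℂ[X]) (h0 : ∀ i, f i ≠ 0)
    (hinj : Function.Injective fun i => (f i).natDegree) : LinearIndependent ℂ f := by
  classical
  rw [linearIndependent_iff']
  intro s g hg i hi
  by_contra hgi
  have hd := degree_sum_eq_of_disjoint (fun i => g i • f i) s (by
    intro a ha b hb hab heq
    simp only [Set.mem_ofPred_eq] at ha hb
    have h1 : g a ≠ 0 := fun h => ha.2 (by simp [h])
    have h2 : g b ≠ 0 := fun h => hb.2 (by simp [h])
    simp only [Function.onFun, Function.comp] at heq
    rw [smul_eq_C_mul, smul_eq_C_mul, degree_C_mul h1, degree_C_mul h2] at heq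
    exact hab (hinj (natDegree_eq_of_degree_eq heq)))
  rw [hg, degree_zero] at hd
  have h3 := Finset.le_sup (f := fun i => degree (g i • f i)) hi
  rw [← hd, le_bot_iff, degree_eq_bot] at h3
  simp [hgi, h0 i] at h3

def ksI (n : ℕ) : Finset (Σ _ : ℕ, ℕ) := (Finset.range (n-1)).sigma (fun t => Finset.range (t+1))

lemma ksI_card (n : ℕ) : (ksI n).card * 2 = n * (n - 1) := by
  rw [ksI, Finset.card_sigma]
  simp only [Finset.card_range]
  rcases n with _ | n
  · simp
  · have := Finset.sum_range_id_mul_two (n + 1)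
    rw [Finset.sum_range_succ'] at this
    simpa using this

noncomputable def ksW (p : ℂ[X]) : Submodule ℂ ℂ[X] :=
  Submodule.span ℂ (Set.range fun x : ksI p.natDegree => X ^ (x.1.1 - x.1.2) * p ^ x.1.2)

lemma ksI_mem (n : ℕ) (x : Σ _ : ℕ, ℕ) (h : x ∈ ksI n) : x.2 ≤ x.1 ∧ x.1 + 2 ≤ n := by
  simp only [ksI, Finset.mem_sigma, Finset.mem_range] at h
  omega

lemma ksW_finrank (p : ℂ[X]) (hp : 1 < p.natDegree) :
    Module.finrank ℂ (ksW p) * 2 = p.natDegree * (p.natDegree - 1) := by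
  have hp0 : p ≠ 0 := by rintro rfl; simp at hp
  rw [ksW, finrank_span_eq_card, Fintype.card_coe, ksI_card]
  apply ks_linInd
  · intro i; exact mul_ne_zero (pow_ne_zero _ X_ne_zero) (pow_ne_zero _ hp0)
  · intro a b hab
    obtain ⟨⟨a1, a2⟩, ha⟩ := a
    obtain ⟨⟨b1, b2⟩, hb⟩ := b
    have h1 := ksI_mem _ _ ha
    have h2 := ksI_mem _ _ hb
    simp only at hab h1 h2
    rw [natDegree_mul (pow_ne_zero _ X_ne_zero) (pow_ne_zero _ hp0),
      natDegree_mul (pow_ne_zero _ X_ne_zero) (pow_ne_zero _ hp0), natDegree_X_pow, natDegree_X_pow,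
      natDegree_pow, natDegree_pow] at hab
    have e1 := congrArg (· % p.natDegree) hab
    simp only [Nat.add_mul_mod_self_right] at e1
    rw [Nat.mod_eq_of_lt (by omega), Nat.mod_eq_of_lt (by omega)] at e1
    rw [e1] at hab
    have e2 : a2 = b2 := Nat.eq_of_mul_eq_mul_right (by omega) (Nat.add_left_cancel hab)
    have e3 : a1 = b1 := by omega
    subst e2 e3
    rfl

lemma ksW_fin (p : ℂ[X]) : FiniteDimensional ℂ (ksW p) := by
  rw [ksW]
  exact FiniteDimensional.span_of_finite ℂ (Set.finite_range _)

lemma ksW_deg (p : ℂ[X]) (hp : 1 < p.natDegree) (w : ℂ[X]) (hw : w ∈ ksW p) :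
    w.degree < (p.natDegree ^ 2 : ℕ) := by
  have : ksW p ≤ degreeLT ℂ (p.natDegree ^ 2) := by
    rw [ksW, Submodule.span_le]
    rintro _ ⟨⟨⟨a1, a2⟩, ha⟩, rfl⟩
    have h1 := ksI_mem _ _ ha
    simp only at h1
    rw [SetLike.mem_coe, mem_degreeLT]
    refine lt_of_le_of_lt degree_le_natDegree ?_
    norm_cast
    refine lt_of_le_of_lt natDegree_mul_le ?_
    simp only
    rw [natDegree_X_pow, natDegree_pow]
    have : a2 * p.natDegree ≤ (p.natDegree - 2) * p.natDegree := Nat.mul_le_mul_right _ (by omega)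
    obtain ⟨c, hc⟩ : ∃ c, p.natDegree = c + 2 := ⟨p.natDegree - 2, by omega⟩
    rw [hc] at this h1 ⊢
    simp at this
    nlinarith [Nat.sub_le a1 a2]
  exact mem_degreeLT.mp (this hw)

lemma ksW_iso (p : ℂ[X]) (hp : 1 < p.natDegree) (w : ℂ[X]) (hw : w ∈ ksW p) (v : ℂ[X])
    (hv : v ∈ ksW p) : ksphi p (w * ksg p v) = 0 := by
  induction hw using Submodule.span_induction with
  | zero => simp
  | add x y _ _ hx hy => rw [add_mul, map_add, hx, hy, add_zero]
  | smul c x _ hx => rw [smul_mul_assoc, map_smul, hx, smul_zero]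
  | mem x hx =>
    induction hv using Submodule.span_induction with
    | zero => simp [ksg_zero]
    | add x y _ _ hx hy => rw [ksg_add, mul_add, map_add, hx, hy, add_zero]
    | smul c x _ hx => rw [ksg_smul, mul_smul_comm, map_smul, hx, smul_zero]
    | mem y hy =>
      obtain ⟨⟨⟨a1, a2⟩, ha⟩, rfl⟩ := hx
      obtain ⟨⟨⟨b1, b2⟩, hb⟩, rfl⟩ := hy
      have h1 := ksI_mem _ _ ha
      have h2 := ksI_mem _ _ hb
      simp only at h1 h2 ⊢
      rw [ksphi_congr p hp _ (X ^ (a1 - a2 + b2) * p ^ (a2 + (b1 - b2))) ?_]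
      · apply ksphi_monomial p hp
        omega
      · have e : ksg p (X ^ (b1 - b2) * p ^ b2) =
            p ^ (b1 - b2) * ((p.map (starRingEnd ℂ)).comp p) ^ b2 := by
          simp [ksg]
        rw [e]
        have e2 : X ^ (a1 - a2) * p ^ a2 * (p ^ (b1 - b2) * ((p.map (starRingEnd ℂ)).comp p) ^ b2) -
          X ^ (a1 - a2 + b2) * p ^ (a2 + (b1 - b2)) =
          X ^ (a1 - a2) * p ^ (a2 + (b1 - b2)) * (((p.map (starRingEnd ℂ)).comp p) ^ b2 - X ^ b2) := by
          ring
        rw [e2]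
        exact Dvd.dvd.mul_left (sub_dvd_pow_sub_pow _ _ _) _


noncomputable def kss (p : ℂ[X]) (z : ℂ) : ℂ := (starRingEnd ℂ) (p.eval z)

lemma ksF_eval (p : ℂ[X]) (z : ℂ) : (ksF p).eval z = kss p (kss p z) - z := by
  rw [ksF, eval_sub, eval_comp, ks_map_eval, eval_X]; rfl

lemma ksF_root (p : ℂ[X]) (z : ℂ) : (ksF p).IsRoot z ↔ kss p (kss p z) = z := by
  rw [IsRoot, ksF_eval, sub_eq_zero]

lemma ksF_der (p : ℂ[X]) (z : ℂ) : (ksF p).derivative.eval z =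
    p.derivative.eval z * (starRingEnd ℂ) (p.derivative.eval (kss p z)) - 1 := by
  rw [ksF, derivative_sub, derivative_comp, derivative_X, eval_sub, eval_mul, eval_comp,
    derivative_map, ks_map_eval, eval_one]
  rfl

lemma ks_cop (a : ℂ) (g : ℂ[X]) (k : ℕ) (h : g.eval a ≠ 0) : IsCoprime ((X - C a) ^ k) g := by
  apply IsCoprime.pow_left
  rw [(irreducible_X_sub_C a).coprime_iff_not_dvd, dvd_iff_isRoot]
  exact h

lemma ks_mult_le (p : ℂ[X]) (hp : 1 < p.natDegree) (z : ℂ) (hz : kss p (kss p z) = z) :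
    (ksF p).rootMultiplicity (kss p z) ≤ (ksF p).rootMultiplicity z := by
  have hF := ksF_ne_zero p hp
  set a := kss p z with ha
  by_cases hd : p.derivative.eval a = 0
  · have h1 : 0 < (ksF p).rootMultiplicity z := (rootMultiplicity_pos hF).2 ((ksF_root p z).2 hz)
    have h2 : ¬ 1 < (ksF p).rootMultiplicity a := by
      rw [one_lt_rootMultiplicity_iff_isRoot hF]
      rintro ⟨h, h'⟩
      rw [IsRoot, ksF_der, hd] at h'
      simp at h'
    omega
  · set m := (ksF p).rootMultiplicity z
    set m' := (ksF p).rootMultiplicity a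
    obtain ⟨u, hu, hu'⟩ := exists_eq_pow_rootMultiplicity_mul_and_not_dvd (ksF p) hF z
    rw [dvd_iff_isRoot] at hu'
    have h1 : (X - C a) ^ m' ∣ ksg p (ksF p) := (pow_rootMultiplicity_dvd _ _).trans (ksF_dvd_ksgF p)
    rw [hu, ksg_mul, ksg_pow] at h1
    have h2 : (X - C a) ^ m' ∣ (ksg p (X - C z)) ^ m := by
      refine (ks_cop a _ m' ?_).dvd_of_dvd_mul_right h1
      rw [ksg_eval]
      change (starRingEnd ℂ) (eval (kss p a) u) ≠ 0
      rw [hz]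
      simpa using hu'
    have h3 : (X - C a) ∣ ksg p (X - C z) := by
      rw [dvd_iff_isRoot, IsRoot, ksg_eval]
      change (starRingEnd ℂ) (eval (kss p a) _) = 0
      rw [hz]
      simp
    obtain ⟨v, hv⟩ := h3
    have hva : v.eval a ≠ 0 := by
      have e := congrArg (fun f => (derivative f).eval a) hv
      simp [ksg] at e
      rwa [← e]
    rw [hv, mul_pow] at h2
    have h4 := (ks_cop a (v ^ m) m' (by rw [eval_pow]; exact pow_ne_zero _ hva)).dvd_of_dvd_mul_right h2
    rwa [pow_dvd_pow_iff (X_sub_C_ne_zero a) (irreducible_X_sub_C a).not_isUnit] at h4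

lemma ks_mult_eq (p : ℂ[X]) (hp : 1 < p.natDegree) (z : ℂ) (hz : kss p (kss p z) = z) :
    (ksF p).rootMultiplicity (kss p z) = (ksF p).rootMultiplicity z := by
  apply le_antisymm (ks_mult_le p hp z hz)
  have := ks_mult_le p hp (kss p z) (by rw [hz])
  rwa [hz] at this

noncomputable def kse (p : ℂ[X]) (z : ℂ) : ℕ :=
  open Classical in
  if kss p z = z then (ksF p).rootMultiplicity z / 2 else
    if z.re < (kss p z).re ∨ (z.re = (kss p z).re ∧ z.im < (kss p z).im) then
      (ksF p).rootMultiplicity z else 0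

lemma kse_add (p : ℂ[X]) (hp : 1 < p.natDegree) (z : ℂ) (hz : kss p (kss p z) = z)
    (hne : kss p z ≠ z) :
    kse p z + kse p (kss p z) = (ksF p).rootMultiplicity z := by
  have hm := ks_mult_eq p hp z hz
  unfold kse
  rw [hz, hm, if_neg hne, if_neg hne.symm]
  rcases lt_trichotomy z.re (kss p z).re with h | h | h
  · rw [if_pos (Or.inl h), if_neg]; · rfl
    rintro (h' | h') <;> [linarith; linarith [h'.1]]
  · rcases lt_trichotomy z.im (kss p z).im with h2 | h2 | h2
    · rw [if_pos (Or.inr ⟨h, h2⟩), if_neg]; · rfl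
      rintro (h' | h') <;> [linarith; linarith [h'.2]]
    · exact absurd (Complex.ext h h2).symm hne
    · have hq : (kss p z).re < z.re ∨ (kss p z).re = z.re ∧ (kss p z).im < z.im :=
        Or.inr ⟨h.symm, h2⟩
      rw [if_pos hq, if_neg]; · simp
      rintro (h' | h') <;> [linarith; linarith [h'.2]]
  · rw [if_pos (Or.inl h), if_neg]; · simp
    rintro (h' | h') <;> [linarith; linarith [h'.1]]

lemma ks_dvd_prod (p : ℂ[X]) (Z : Finset ℂ) (hZ : ∀ z ∈ Z, kss p (kss p z) = z) 
    (hZ' : ∀ z ∈ Z, kss p z ∈ Z) (e : ℂ → ℕ) :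
    ∏ z ∈ Z, (X - C z) ^ e (kss p z) ∣ ksg p (∏ z ∈ Z, (X - C z) ^ e z) := by
  have h1 : ∏ z ∈ Z, (X - C z) ^ e (kss p z) = ∏ z ∈ Z, (X - C (kss p z)) ^ e z := by
    refine Finset.prod_bij' (fun z _ => kss p z) (fun z _ => kss p z) hZ' hZ' hZ hZ ?_
    intro z hz
    rw [hZ z hz]
  rw [h1, ksg_prod]
  refine Finset.prod_dvd_prod_of_dvd _ _ fun z hz => ?_
  rw [ksg_pow]
  apply pow_dvd_pow_of_dvd
  rw [dvd_iff_isRoot, IsRoot, ksg_eval]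
  change (starRingEnd ℂ) (eval (kss p (kss p z)) _) = 0
  rw [hZ z hz]
  simp

lemma ks_fact (p : ℂ[X]) (hp : 1 < p.natDegree) : ∃ (D0 D1 : ℂ[X]) (O : Finset ℂ),
    D0.Monic ∧ D1.Monic ∧ ksFm p = D0 * D1 * ∏ z ∈ O, (X - C z) ∧ D0.natDegree = D1.natDegree ∧
    D1 ∣ ksg p D0 ∧ D0 ∣ ksg p D1 ∧ (∀ z ∈ O, kss p z = z) ∧
    (∀ z, kss p z = z → 1 < ‖p.derivative.eval z‖ → z ∈ O ∧ D0.eval z ≠ 0) := by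
  classical
  have hF := ksF_ne_zero p hp
  set Z := (ksF p).roots.toFinset with hZdef
  have hmem : ∀ z, z ∈ Z ↔ kss p (kss p z) = z := by
    intro z
    rw [hZdef, Multiset.mem_toFinset, mem_roots hF, ksF_root]
  have hZ : ∀ z ∈ Z, kss p (kss p z) = z := fun z hz => (hmem z).1 hz
  have hZ' : ∀ z ∈ Z, kss p z ∈ Z := fun z hz => (hmem _).2 (by rw [hZ z hz])
  set O := Z.filter (fun z => kss p z = z ∧ (ksF p).rootMultiplicity z % 2 = 1) with hO
  refine ⟨∏ z ∈ Z, (X - C z) ^ kse p z, ∏ z ∈ Z, (X - C z) ^ kse p (kss p z), O, ?_, ?_, ?_, ?_,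
    ?_, ?_, ?_, ?_⟩
  · exact monic_prod_of_monic _ _ fun z _ => (monic_X_sub_C z).pow _
  · exact monic_prod_of_monic _ _ fun z _ => (monic_X_sub_C z).pow _
  · have hr : (ksFm p).roots = (ksF p).roots := by
      rw [ksFm, mul_comm, roots_C_mul]
      simpa using hF
    rw [(IsAlgClosed.splits (ksFm p)).eq_prod_roots_of_monic (ksFm_monic p hp), hr,
      prod_multiset_root_eq_finset_root, hO, Finset.prod_filter, ← Finset.prod_mul_distrib,
      ← Finset.prod_mul_distrib]
    refine Finset.prod_congr rfl fun z hz => ?_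
    rw [← pow_add]
    by_cases hs : kss p z = z
    · rw [hs]
      simp only [kse, hs, if_true, true_and]
      split_ifs with h2
      · rw [← pow_succ]; congr 1; omega
      · rw [mul_one]; congr 1; omega
    · rw [kse_add p hp z (hZ z hz) hs, if_neg (fun h => hs h.1), mul_one]
  · rw [natDegree_prod_of_monic _ _ fun z _ => (monic_X_sub_C z).pow _,
      natDegree_prod_of_monic _ _ fun z _ => (monic_X_sub_C z).pow _]
    simp only [natDegree_pow, natDegree_X_sub_C, mul_one]
    refine Finset.sum_bij' (fun z _ => kss p z) (fun z _ => kss p z) hZ' hZ' hZ hZ ?_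
    intro z hz
    rw [hZ z hz]
  · exact ks_dvd_prod p Z hZ hZ' (kse p)
  · have := ks_dvd_prod p Z hZ hZ' (fun z => kse p (kss p z))
    convert this using 1
    exact Finset.prod_congr rfl fun z hz => by simp only [hZ z hz]
  · intro z hz
    exact (Finset.mem_filter.1 hz).2.1
  · intro z hz hd
    have hzZ : kss p (kss p z) = z := by rw [hz, hz]
    have h1 : 0 < (ksF p).rootMultiplicity z := (rootMultiplicity_pos hF).2 ((ksF_root p z).2 hzZ)
    have h2 : ¬ 1 < (ksF p).rootMultiplicity z := by
      rw [one_lt_rootMultiplicity_iff_isRoot hF]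
      rintro ⟨_, h⟩
      rw [IsRoot, ksF_der, hz, Complex.mul_conj', sub_eq_zero] at h
      have : ‖p.derivative.eval z‖ ^ 2 = 1 := by exact_mod_cast h
      nlinarith
    have h3 : (ksF p).rootMultiplicity z = 1 := by omega
    refine ⟨Finset.mem_filter.2 ⟨(hmem z).2 hzZ, hz, by rw [h3]⟩, ?_⟩
    rw [eval_prod, Finset.prod_ne_zero_iff]
    intro y hy
    rw [eval_pow]
    by_cases hyz : y = z
    · subst hyz
      simp [kse, hz, h3]
    · apply pow_ne_zero
      simp [sub_eq_zero, Ne.symm hyz]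


lemma ks_roots_dvd (S : Finset ℂ) (y : ℂ[X]) (h : ∀ r ∈ S, y.eval r = 0) :
    ∏ r ∈ S, (X - C r) ∣ y := by
  apply Finset.prod_dvd_of_coprime
  · intro a _ b _ hab
    exact pairwise_coprime_X_sub_C Function.injective_id hab
  · intro r hr
    rw [dvd_iff_isRoot]; exact h r hr

lemma ks_divD0 (p : ℂ[X]) (hp : 1 < p.natDegree) (D0 D1 L : ℂ[X]) (h0 : D0.Monic) (h1 : D1.Monic)
    (hL : L.Monic) (hF : ksFm p = D0 * D1 * L) (hd : D0 ∣ ksg p D1) (w : ℂ[X])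
    (hw : ∀ h : ℂ[X], h.degree < D1.degree → ksphi p (w * ksg p (D0 * L * h)) = 0) : D0 ∣ w := by
  have hmon := ksFm_monic p hp
  have a1 : ∀ h, ksphi p (w * ksg p (D0 * L * h)) = 0 := by
    intro h
    rw [← hw (h %ₘ D1) (degree_modByMonic_lt h h1)]
    apply ksphi_congr p hp
    rw [← mul_sub, ← ksg_sub, ← mul_sub]
    apply Dvd.dvd.mul_left
    apply ksF_dvd_ksg
    rw [← ksFm_dvd_iff p hp, hF]
    refine ⟨h /ₘ D1, ?_⟩
    have := modByMonic_add_div h D1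
    linear_combination (-D0 * L) * this
  have a2 : ksF p ∣ w * ksg p (D0 * L) := by
    apply ksphi_nondeg p hp
    intro g
    rw [← a1 (ksg p g)]
    apply ksphi_congr p hp
    rw [ksg_mul p (D0 * L) (ksg p g), ← mul_assoc w, ← mul_sub]
    apply Dvd.dvd.mul_left
    rw [dvd_sub_comm]
    exact ksF_dvd_ksgg p g
  have a3 := ksF_dvd_ksg p _ a2
  rw [ksg_mul] at a3
  have a4 : ksF p ∣ ksg p w * (D0 * L) := by
    have := (ksF_dvd_ksgg p (D0 * L)).mul_left (ksg p w)
    rw [mul_sub] at this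
    exact (dvd_sub_right a3).1 this
  rw [← ksFm_dvd_iff p hp, hF, show D0 * D1 * L = D1 * (D0 * L) by ring,
    mul_dvd_mul_iff_right (h0.mul hL).ne_zero] at a4
  have a5 : D0 ∣ ksg p (ksg p w) := hd.trans (ksg_dvd p _ _ a4)
  have a6 : D0 ∣ ksg p (ksg p w) - w := by
    have := (ksFm_dvd_iff p hp _).2 (ksF_dvd_ksgg p w)
    rw [hF, mul_assoc] at this
    exact (dvd_mul_right _ _).trans this
  exact (dvd_sub_right a5).1 a6

lemma ks_pos (p : ℂ[X]) (hp : 1 < p.natDegree) (D0 D1 : ℂ[X]) (h0 : D0.Monic) (h1 : D1.Monic)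
    (S T : Finset ℂ) 
    (hF : ksFm p = D0 * D1 * ((∏ z ∈ T, (X - C z)) * ∏ z ∈ S, (X - C z))) (hd : D1 ∣ ksg p D0)
    (hS : ∀ z ∈ S, kss p z = z ∧ 1 < ‖p.derivative.eval z‖)
    (w : ℂ[X]) (hw : ksphi p (w * ksg p w) = 0)
    (hdiv : D0 * (∏ z ∈ T, (X - C z)) ∣ w) :
    D0 * ((∏ z ∈ T, (X - C z)) * ∏ z ∈ S, (X - C z)) ∣ w := by
  rcases S.eq_empty_or_nonempty with rfl | hSn
  · simpa using hdiv
  obtain ⟨y, hy⟩ := hdiv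
  set P := ∏ z ∈ T, (X - C z) with hP
  have hPm : P.Monic := monic_prod_X_sub_C _ _
  obtain ⟨v, hv⟩ : D1 ∣ ksg p w := hd.trans (ksg_dvd p _ _ ⟨P * y, by rw [hy]; ring⟩)
  set M := D0 * D1 * P with hMdef
  have hM : M.Monic := (h0.mul h1).mul hPm
  have hF' : ksFm p = M * ∏ z ∈ S, (X - C z) := by rw [hF, hMdef]; ring
  have hwM : w * ksg p w = M * (y * v) := by rw [hv, hMdef]; nth_rw 1 [hy]; ring
  have hloc := ksphi_local p hp M (y * v) hM S hSn hF'
  rw [← hwM, hw] at hloc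
  set c := (ksF p).leadingCoeff with hc
  have hc0 : c ≠ 0 := by simpa [hc] using ksF_ne_zero p hp
  have hFc : ksF p = C c * (M * ∏ z ∈ S, (X - C z)) := by
    rw [← hF', ksFm, ← hc, mul_comm (ksF p), ← mul_assoc, ← C_mul, mul_inv_cancel₀ hc0, C_1, one_mul]
  have hder : ∀ r ∈ S, ((‖p.derivative.eval r‖ ^ 2 - 1 : ℝ) : ℂ) =
      c * (M.eval r * ∏ j ∈ S.erase r, (r - j)) := by
    intro r hr
    have e1 := ksF_der p r
    rw [(hS r hr).1, Complex.mul_conj'] at e1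
    push_cast
    rw [← e1, hFc, ← Finset.mul_prod_erase S _ hr]
    simp [eval_prod]
  have hpos : ∀ r ∈ S, 0 < ‖p.derivative.eval r‖ ^ 2 - 1 := by
    intro r hr
    nlinarith [(hS r hr).2]
  have hterm : ∀ r ∈ S, (y * v).eval r / ∏ j ∈ S.erase r, (r - j) =
      c * ((‖w.eval r‖ ^ 2 / (‖p.derivative.eval r‖ ^ 2 - 1) : ℝ) : ℂ) := by
    intro r hr
    have hne : c * (M.eval r * ∏ j ∈ S.erase r, (r - j)) ≠ 0 := by
      rw [← hder r hr]
      exact_mod_cast (hpos r hr).ne'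
    have e2 := congrArg (eval r) hwM
    rw [eval_mul, ksg_eval] at e2
    change eval r w * (starRingEnd ℂ) (eval (kss p r) w) = _ at e2
    rw [(hS r hr).1, Complex.mul_conj', eval_mul] at e2
    rw [Complex.ofReal_div, hder r hr, Complex.ofReal_pow, e2]
    have n1 := left_ne_zero_of_mul (right_ne_zero_of_mul hne)
    have n2 := right_ne_zero_of_mul (right_ne_zero_of_mul hne)
    field_simp
  rw [Finset.sum_congr rfl hterm, ← Finset.mul_sum, eq_comm, mul_eq_zero, or_iff_right hc0,
    ← Complex.ofReal_sum, Complex.ofReal_eq_zero, Finset.sum_eq_zero_iff_of_nonneg (fun r hr =>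
      div_nonneg (sq_nonneg _) (hpos r hr).le)] at hloc
  have hwr : ∀ r ∈ S, y.eval r = 0 := by
    intro r hr
    have := hloc r hr
    rw [div_eq_zero_iff, or_iff_left (hpos r hr).ne'] at this
    have h3 : w.eval r = 0 := by simpa using this
    have hne : c * (M.eval r * ∏ j ∈ S.erase r, (r - j)) ≠ 0 := by
      rw [← hder r hr]
      exact_mod_cast (hpos r hr).ne'
    have n1 := left_ne_zero_of_mul (right_ne_zero_of_mul hne)
    rw [hMdef, eval_mul, eval_mul] at n1
    rw [hy, eval_mul, eval_mul] at h3
    rcases mul_eq_zero.1 h3 with h4 | h4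
    · rcases mul_eq_zero.1 h4 with h5 | h5 <;> simp [h5] at n1
    · exact h4
  rw [hy, ← mul_assoc]
  exact mul_dvd_mul_left _ (ks_roots_dvd S y hwr)


lemma ks_LA1 {V : Type*} [AddCommGroup V] [Module ℂ V] (W K : Submodule ℂ V)
    [FiniteDimensional ℂ W] [FiniteDimensional ℂ K] (β : V → (V →ₗ[ℂ] ℂ))
    (hadd : ∀ u v, β (u + v) = β u + β v) (hsmul : ∀ (c : ℂ) v, β (c • v) = (starRingEnd ℂ) c • β v)
    (hW : ∀ v ∈ W, ∀ w ∈ W, β v w = 0) :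
    ∃ W' ≤ W, Module.finrank ℂ W + Module.finrank ℂ (W ⊓ K : Submodule ℂ V) ≤
      Module.finrank ℂ K + Module.finrank ℂ W' ∧ ∀ w ∈ W', ∀ k ∈ K, β k w = 0 := by
  obtain ⟨K2, hK2⟩ := Submodule.exists_isCompl ((W ⊓ K).comap K.subtype)
  have hfr := Submodule.finrank_add_eq_of_isCompl hK2
  have e1 : Module.finrank ℂ ((W ⊓ K).comap K.subtype) =
      Module.finrank ℂ (W ⊓ K : Submodule ℂ V) :=
    (Submodule.comapSubtypeEquivOfLe (inf_le_right : W ⊓ K ≤ K)).finrank_eq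
  let b := Module.finBasis ℂ K2
  let Φ : W →ₗ[ℂ] (Fin (Module.finrank ℂ K2) → ℂ) :=
    LinearMap.pi (fun i => (β ((b i : K) : V)).comp W.subtype)
  have h2 := LinearMap.finrank_range_add_finrank_ker Φ
  have h3 : Module.finrank ℂ (LinearMap.range Φ) ≤ Module.finrank ℂ K2 := by
    have := Submodule.finrank_le (LinearMap.range Φ)
    simpa using this
  refine ⟨(LinearMap.ker Φ).map W.subtype, Submodule.map_subtype_le _ _, ?_, ?_⟩
  · rw [Submodule.finrank_map_subtype_eq]
    omega
  · rintro _ ⟨w, hw, rfl⟩ k hk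
    have hz : β 0 = 0 := by simpa using hsmul 0 0
    have h4 : ∀ x : K2, β ((x : K) : V) (w : V) = 0 := by
      intro x
      have hx : x ∈ Submodule.span ℂ (Set.range b) := by rw [b.span_eq]; trivial
      induction hx using Submodule.span_induction with
      | zero => simp [hz]
      | add x y _ _ hx hy => 
        push_cast
        rw [hadd, LinearMap.add_apply, hx, hy, add_zero]
      | smul c x _ hx => 
        push_cast
        rw [hsmul, LinearMap.smul_apply, hx, smul_zero]
      | mem x hx =>
        obtain ⟨i, rfl⟩ := hx
        exact congrFun hw i
    have h5 : (⟨k, hk⟩ : K) ∈ ((W ⊓ K).comap K.subtype) ⊔ K2 := by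
      rw [hK2.sup_eq_top]; trivial
    obtain ⟨u, hu, v, hv, huv⟩ := Submodule.mem_sup.1 h5
    have h6 : k = (u : V) + (v : V) := by rw [← Submodule.coe_add, huv]
    rw [h6, hadd, LinearMap.add_apply]
    have h7 := h4 ⟨v, hv⟩
    simp only [Submodule.subtype_apply]
    rw [h7, hW u hu.1 w w.2, add_zero]

lemma ks_LA2 (W' U : Submodule ℂ ℂ[X]) [FiniteDimensional ℂ W'] [FiniteDimensional ℂ U]
    (D0 : ℂ[X]) (h0 : D0 ≠ 0) (hdiv : ∀ w ∈ W', D0 ∣ w) (T : Finset ℂ)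
    (hU : ∀ w ∈ W', D0 * ∏ z ∈ T, (X - C z) ∣ w → w ∈ U) :
    Module.finrank ℂ W' ≤ T.card + Module.finrank ℂ U := by
  choose y hy using fun w : W' => hdiv w w.2
  let Y : W' →ₗ[ℂ] ℂ[X] :=
    { toFun := y
      map_add' := by
        intro a b
        apply mul_left_cancel₀ h0
        rw [mul_add, ← hy, ← hy, ← hy]; rfl
      map_smul' := by
        intro c a
        apply mul_left_cancel₀ h0
        rw [RingHom.id_apply, mul_smul_comm, ← hy, ← hy]; rfl }
  let Ψ : W' →ₗ[ℂ] (T → ℂ) := LinearMap.pi (fun r => (leval (r : ℂ)).comp Y)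
  have h2 := LinearMap.finrank_range_add_finrank_ker Ψ
  have h3 : Module.finrank ℂ (LinearMap.range Ψ) ≤ T.card := by
    have := Submodule.finrank_le (LinearMap.range Ψ)
    simpa using this
  have h4 : (LinearMap.ker Ψ).map W'.subtype ≤ U := by
    rintro _ ⟨w, hw, rfl⟩
    apply hU _ w.2
    rw [hy w]
    apply mul_dvd_mul_left
    apply ks_roots_dvd
    intro r hr
    exact congrFun hw ⟨r, hr⟩
  have h5 := Submodule.finrank_mono h4
  rw [Submodule.finrank_map_subtype_eq] at h5
  omega

lemma ks_dim (p : ℂ[X]) (hp : 1 < p.natDegree) (D0 D1 : ℂ[X]) (h0 : D0.Monic) (h1 : D1.Monic)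
    (S T : Finset ℂ) 
    (hF : ksFm p = D0 * D1 * ((∏ z ∈ T, (X - C z)) * ∏ z ∈ S, (X - C z)))
    (hdeg : D0.natDegree = D1.natDegree) (hd : D1 ∣ ksg p D0) (hd' : D0 ∣ ksg p D1)
    (hS : ∀ z ∈ S, kss p z = z ∧ 1 < ‖p.derivative.eval z‖) :
    Module.finrank ℂ (ksW p) ≤ D1.natDegree + T.card := by
  set L := (∏ z ∈ T, (X - C z)) * ∏ z ∈ S, (X - C z) with hL
  have hLm : L.Monic := (monic_prod_X_sub_C _ _).mul (monic_prod_X_sub_C _ _)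
  have hKm := h0.mul hLm
  set K := (degreeLT ℂ D1.natDegree).map (LinearMap.mulLeft ℂ (D0 * L)) with hK
  have hinj : Function.Injective (LinearMap.mulLeft ℂ (D0 * L)) := by
    intro a b hab
    exact mul_left_cancel₀ hKm.ne_zero hab
  have eK := Submodule.equivMapOfInjective _ hinj (degreeLT ℂ D1.natDegree)
  have eK2 := degreeLTEquiv ℂ D1.natDegree
  have : FiniteDimensional ℂ (degreeLT ℂ D1.natDegree) := eK2.symm.finiteDimensional
  have : FiniteDimensional ℂ K := eK.finiteDimensional
  have hKf : Module.finrank ℂ K = D1.natDegree := by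
    rw [← eK.finrank_eq, eK2.finrank_eq]; simp
  have := ksW_fin p
  let β : ℂ[X] → (ℂ[X] →ₗ[ℂ] ℂ) := fun v => (ksphi p).comp (LinearMap.mulRight ℂ (ksg p v))
  have hβ : ∀ v w, β v w = ksphi p (w * ksg p v) := fun v w => rfl
  obtain ⟨W', hW'W, hfin, hW'⟩ := ks_LA1 (ksW p) K β
    (by intro u v; refine LinearMap.ext fun w => ?_; simp only [LinearMap.add_apply, hβ, ksg_add, mul_add, map_add])
    (by intro c v; refine LinearMap.ext fun w => ?_; simp only [LinearMap.smul_apply, hβ, ksg_smul, mul_smul_comm, map_smul])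
    (fun v hv w hw => ksW_iso p hp w hw v hv)
  have hD0 : ∀ w ∈ W', D0 ∣ w := by
    intro w hw
    apply ks_divD0 p hp D0 D1 L h0 h1 hLm hF hd' w
    intro h hh
    refine hW' w hw _ ⟨h, ?_, rfl⟩
    rw [SetLike.mem_coe, mem_degreeLT]
    rwa [degree_eq_natDegree h1.ne_zero] at hh
  have : FiniteDimensional ℂ W' := Submodule.finiteDimensional_of_le hW'W
  have := ks_LA2 W' (ksW p ⊓ K) D0 h0.ne_zero hD0 T (by
    intro w hw hdv
    refine ⟨hW'W hw, ?_⟩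
    obtain ⟨h, hh⟩ := ks_pos p hp D0 D1 h0 h1 S T hF hd hS w
      (ksW_iso p hp w (hW'W hw) w (hW'W hw)) hdv
    refine ⟨h, ?_, hh.symm⟩
    rw [SetLike.mem_coe, mem_degreeLT]
    by_cases hz : h = 0
    · rw [hz, degree_zero]; exact WithBot.bot_lt_coe _
    · have hwd := ksW_deg p hp w (hW'W hw)
      rw [hh, degree_mul, degree_eq_natDegree hKm.ne_zero, degree_eq_natDegree hz] at hwd
      rw [degree_eq_natDegree hz]
      have e := ksFm_natDegree p hp
      rw [hF, (h0.mul h1).natDegree_mul hLm, h0.natDegree_mul h1] at e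
      rw [h0.natDegree_mul hLm] at hwd
      norm_cast at hwd ⊢
      omega)
  omega

lemma ks_big (p : ℂ[X]) (hp : 1 < p.natDegree) (hfin : ∀ S : Finset ℂ,
    (∀ z ∈ S, (starRingEnd ℂ) (p.eval z) = z ∧ ‖p.derivative.eval z‖ ≤ 1) →
      S.card ≤ p.natDegree - 1) (Q : Finset ℂ) 
    (hQ : ∀ z, z ∈ Q ↔ kss p z = z) : Q.card ≤ 3 * p.natDegree - 2 := by
  classical
  obtain ⟨D0, D1, O, h0, h1, hF, hdeg, hd, hd', hO, hRR⟩ := ks_fact p hp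
  set S := O.filter (fun z => 1 < ‖p.derivative.eval z‖) with hS
  set T := O.filter (fun z => ¬ 1 < ‖p.derivative.eval z‖) with hT
  have hcard : S.card + T.card = O.card := Finset.card_filter_add_card_filter_not _
  have hprod : ∏ z ∈ O, (X - C z) = (∏ z ∈ T, (X - C z)) * ∏ z ∈ S, (X - C z) := by
    rw [mul_comm, Finset.prod_filter_mul_prod_filter_not]
  have hTc : T.card ≤ p.natDegree - 1 := by
    apply hfin
    intro z hz
    rw [Finset.mem_filter] at hz
    exact ⟨hO z hz.1, not_lt.1 hz.2⟩
  have hdim := ks_dim p hp D0 D1 h0 h1 S T (by rw [hF, hprod]) hdeg hd hd' (by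
    intro z hz
    rw [Finset.mem_filter] at hz
    exact ⟨hO z hz.1, hz.2⟩)
  have hWf := ksW_finrank p hp
  have e := ksFm_natDegree p hp
  rw [hF, (h0.mul h1).natDegree_mul (monic_prod_X_sub_C _ _), h0.natDegree_mul h1] at e
  have e2 : (∏ z ∈ O, (X - C z)).natDegree = O.card := by simp
  rw [e2] at e
  have hq1 : (Q.filter (fun z => ¬ 1 < ‖p.derivative.eval z‖)).card ≤ p.natDegree - 1 := by
    apply hfin
    intro z hz
    rw [Finset.mem_filter, hQ] at hz
    exact ⟨hz.1, not_lt.1 hz.2⟩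
  have hq2 : (Q.filter (fun z => 1 < ‖p.derivative.eval z‖)).card ≤ S.card := by
    apply Finset.card_le_card
    intro z hz
    rw [Finset.mem_filter, hQ] at hz
    exact Finset.mem_filter.2 ⟨(hRR z hz.1 hz.2).1, hz.2⟩
  have hq3 := Finset.card_filter_add_card_filter_not (s := Q) (fun z => 1 < ‖p.derivative.eval z‖)
  have e5 : p.natDegree * (p.natDegree - 1) + p.natDegree = p.natDegree ^ 2 := by
    obtain ⟨c, hc⟩ : ∃ c, p.natDegree = c + 1 := ⟨p.natDegree - 1, by omega⟩
    rw [hc]; simp; ring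
  omega

end ksB

open Complex Polynomial

theorem khavinson_swiatek (p : Polynomial ℂ) (n : ℕ)
    (hpn : p.natDegree = n) (hn : n > 1) :
    {z : ℂ | z - (starRingEnd ℂ) (p.eval z) = 0}.Finite ∧
      {z : ℂ | z - (starRingEnd ℂ) (p.eval z) = 0}.ncard ≤ 3 * n - 2 := by
  subst hpn
  have hset : ∀ z : ℂ, z ∈ {z : ℂ | z - (starRingEnd ℂ) (p.eval z) = 0} ↔ kss p z = z := by
    intro z
    change z - kss p z = 0 ↔ _
    rw [sub_eq_zero, eq_comm]
  have hfin : {z : ℂ | z - (starRingEnd ℂ) (p.eval z) = 0}.Finite := by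
    refine ((ksF p).roots.toFinset.finite_toSet).subset ?_
    intro z hz
    have hz' := (hset z).1 hz
    rw [Finset.mem_coe, Multiset.mem_toFinset, mem_roots (ksF_ne_zero p hn), ksF_root, hz', hz']
  refine ⟨hfin, ?_⟩
  rw [Set.ncard_eq_toFinset_card _ hfin]
  apply ks_big p hn (fun S hS => ks_count p hn S hS)
  intro z
  rw [Set.Finite.mem_toFinset, hset]
end

section
/- Let p and q be polynomials with real coefficients, viewed as complex polynomials via the inclusion ℝ[X] → ℂ[X], with deg p = n > m = deg q, and define the harmonic polynomial f(z) = p(z) + conj(q(z)). Then the set of solutions z ∈ ℂ of f(z) = 0 satisfying (Re z)·(Im z) ≠ 0 (i.e., lying off both coordinate axes) is finite and has at most n² − n elements. -/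
open Complex Polynomial

lemma aux_span {A : Type*} [CommRing A] [Algebra ℂ A] (x y : A) (n : ℕ) (hn : 0 < n)
    (c d e : ℕ → ℂ)
    (h1 : y ^ n = ∑ k ∈ Finset.range n, (c k • y ^ k + d k • x ^ k))
    (h2 : ∑ i ∈ Finset.range n, x ^ i * y ^ (n - 1 - i) =
      ∑ k ∈ Finset.range n, e k • ∑ i ∈ Finset.range k, x ^ i * y ^ (k - 1 - i))
    (V : Submodule ℂ A) (hV : ∀ i j, i < n - 1 → j < n → x ^ i * y ^ j ∈ V) :
    ∀ D a b, a + b = D → x ^ a * y ^ b ∈ V := by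
  intro D
  induction D using Nat.strong_induction_on with
  | _ D ihD =>
  intro a
  induction a using Nat.strong_induction_on with
  | _ a iha =>
  intro b hab
  by_cases ha : a < n - 1
  · by_cases hb : b < n
    · exact hV a b ha hb
    · obtain ⟨t, rfl⟩ : ∃ t, b = n + t := ⟨b - n, by omega⟩
      have : x ^ a * y ^ (n + t) = ∑ k ∈ Finset.range n,
          (c k • (x ^ a * y ^ (k + t)) + d k • (x ^ (a + k) * y ^ t)) := by
        rw [pow_add, h1, Finset.sum_mul, Finset.mul_sum]
        refine Finset.sum_congr rfl fun k _ => ?_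
        simp only [Algebra.smul_def]
        ring
      rw [this]
      refine V.sum_mem fun k hk => ?_
      have hk := Finset.mem_range.1 hk
      exact V.add_mem (V.smul_mem _ (ihD (a + (k + t)) (by omega) _ _ rfl))
        (V.smul_mem _ (ihD (a + k + t) (by omega) _ _ rfl))
  · obtain ⟨t, rfl⟩ : ∃ t, a = t + (n - 1) := ⟨a - (n - 1), by omega⟩
    obtain ⟨l, rfl⟩ : ∃ l, n = l + 1 := ⟨n - 1, by omega⟩
    simp only [Nat.add_sub_cancel] at *
    rw [Finset.sum_range_succ] at h2
    simp only [Nat.sub_self, pow_zero, mul_one] at h2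
    have h3 := eq_sub_of_add_eq' h2
    have : x ^ (t + l) * y ^ b = ∑ k ∈ Finset.range (l + 1),
        e k • ∑ i ∈ Finset.range k, x ^ (t + i) * y ^ (k - 1 - i + b)
        - ∑ i ∈ Finset.range l, x ^ (t + i) * y ^ (l - i + b) := by
      rw [pow_add, h3, mul_sub, sub_mul, Finset.mul_sum, Finset.sum_mul, Finset.mul_sum,
        Finset.sum_mul]
      congr 1
      · refine Finset.sum_congr rfl fun k _ => ?_
        rw [mul_smul_comm, smul_mul_assoc, Finset.mul_sum, Finset.sum_mul]
        congr 1
        refine Finset.sum_congr rfl fun i _ => ?_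
        ring
      · refine Finset.sum_congr rfl fun i _ => ?_
        ring
    rw [this]
    refine V.sub_mem (V.sum_mem fun k hk => V.smul_mem _ (V.sum_mem fun i hi => ?_))
      (V.sum_mem fun i hi => ?_)
    · have hk := Finset.mem_range.1 hk
      have hi := Finset.mem_range.1 hi
      exact ihD (t + i + (k - 1 - i + b)) (by omega) _ _ rfl
    · have hi := Finset.mem_range.1 hi
      exact iha (t + i) (by omega) _ (by omega)

lemma aux_card (p q : Polynomial ℝ) (n : ℕ)
    (hpn : p.natDegree = n) (hnm : q.natDegree < n) (s : Finset ℂ)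
    (hs : ∀ z ∈ s, (p.map (algebraMap ℝ ℂ)).eval z +
        (starRingEnd ℂ) ((q.map (algebraMap ℝ ℂ)).eval z) = 0 ∧ z.re * z.im ≠ 0) :
    s.card ≤ n ^ 2 - n := by
  classical
  let x : s → ℂ := fun z => z.1
  let y : s → ℂ := fun z => (starRingEnd ℂ) z.1
  have hconj : ∀ (r : Polynomial ℝ) (z : ℂ), (starRingEnd ℂ) ((r.map (algebraMap ℝ ℂ)).eval z)
      = (r.map (algebraMap ℝ ℂ)).eval ((starRingEnd ℂ) z) := by
    intro r z
    simp only [eval_map, ← Polynomial.aeval_def]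
    exact (Polynomial.aeval_conj r z).symm
  have hsum : ∀ (r : Polynomial ℝ) (N : ℕ) (z : ℂ), r.natDegree < N →
      (r.map (algebraMap ℝ ℂ)).eval z = ∑ k ∈ Finset.range N, (r.coeff k : ℂ) * z ^ k := by
    intro r N z h
    rw [Polynomial.eval_eq_sum_range' (n := N) (by rwa [natDegree_map])]
    simp
  have hlead : (p.coeff n : ℂ) ≠ 0 := by
    rw [Ne, Complex.ofReal_eq_zero, ← hpn]
    change p.leadingCoeff ≠ 0
    rw [Ne, leadingCoeff_eq_zero]
    rintro rfl
    simp at hpn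
    omega
  have e1 : ∀ z ∈ s, (p.map (algebraMap ℝ ℂ)).eval z +
      (q.map (algebraMap ℝ ℂ)).eval ((starRingEnd ℂ) z) = 0 := by
    intro z hz
    rw [← hconj]; exact (hs z hz).1
  have e2 : ∀ z ∈ s, (p.map (algebraMap ℝ ℂ)).eval ((starRingEnd ℂ) z) +
      (q.map (algebraMap ℝ ℂ)).eval z = 0 := by
    intro z hz
    have := congrArg (starRingEnd ℂ) (hs z hz).1
    rw [map_add, Complex.conj_conj, map_zero, hconj] at this
    exact this
  have h1 : y ^ n = ∑ k ∈ Finset.range n, ((-(p.coeff k : ℂ) / p.coeff n) • y ^ k +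
      (-(q.coeff k : ℂ) / p.coeff n) • x ^ k) := by
    funext z
    have := e2 z.1 z.2
    rw [hsum p (n+1) _ (by omega), hsum q n _ hnm, Finset.sum_range_succ] at this
    simp only [Pi.pow_apply, Finset.sum_apply, Pi.add_apply, Pi.smul_apply, smul_eq_mul, x, y]
    apply mul_left_cancel₀ hlead
    rw [Finset.mul_sum]
    have h : ∀ k ∈ Finset.range n, (p.coeff n : ℂ) * (-(p.coeff k : ℂ) / p.coeff n *
        (starRingEnd ℂ) z.1 ^ k + -(q.coeff k : ℂ) / p.coeff n * z.1 ^ k) =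
        -((p.coeff k : ℂ) * (starRingEnd ℂ) z.1 ^ k) - (q.coeff k : ℂ) * z.1 ^ k := by
      intro k _
      field_simp
      ring
    rw [Finset.sum_congr rfl h, Finset.sum_sub_distrib, Finset.sum_neg_distrib]
    linear_combination this
  have h2 : ∑ i ∈ Finset.range n, x ^ i * y ^ (n - 1 - i) =
      ∑ k ∈ Finset.range n, (-((p - q).coeff k : ℂ) / p.coeff n) •
        ∑ i ∈ Finset.range k, x ^ i * y ^ (k - 1 - i) := by
    funext z
    have hne : z.1 - (starRingEnd ℂ) z.1 ≠ 0 := by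
      intro h
      have h' := congrArg Complex.im h
      simp at h'
      have := (hs z.1 z.2).2
      apply this
      rw [h', mul_zero]
    have a1 := e1 z.1 z.2
    have a2 := e2 z.1 z.2
    rw [hsum p (n+1) _ (by omega), hsum q n _ hnm, Finset.sum_range_succ] at a1 a2
    simp only [Pi.pow_apply, Finset.sum_apply, Pi.mul_apply, Pi.smul_apply, smul_eq_mul, x, y]
    apply mul_left_cancel₀ hlead
    apply mul_right_cancel₀ hne
    rw [mul_assoc, (Commute.all _ _).geom_sum₂_mul, Finset.mul_sum, Finset.sum_mul]
    have h : ∀ k ∈ Finset.range n, (p.coeff n : ℂ) * (-((p - q).coeff k : ℂ) / p.coeff n *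
        ∑ i ∈ Finset.range k, z.1 ^ i * (starRingEnd ℂ) z.1 ^ (k - 1 - i)) *
          (z.1 - (starRingEnd ℂ) z.1) =
        (p.coeff k : ℂ) * (starRingEnd ℂ) z.1 ^ k - (p.coeff k : ℂ) * z.1 ^ k
        - (q.coeff k : ℂ) * (starRingEnd ℂ) z.1 ^ k + (q.coeff k : ℂ) * z.1 ^ k := by
      intro k _
      rw [mul_assoc, mul_assoc, (Commute.all _ _).geom_sum₂_mul, coeff_sub]
      push_cast
      field_simp
      ring
    rw [Finset.sum_congr rfl h, Finset.sum_add_distrib, Finset.sum_sub_distrib,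
      Finset.sum_sub_distrib]
    linear_combination a1 - a2
  let B : Finset (s → ℂ) := (Finset.range (n - 1) ×ˢ Finset.range n).image
    fun ij => x ^ ij.1 * y ^ ij.2
  have hmem := aux_span x y n (by omega) _ _ _ h1 h2 (Submodule.span ℂ (B : Set (s → ℂ))) (by
    intro i j hi hj
    apply Submodule.subset_span
    simp only [B, Finset.coe_image]
    exact ⟨(i, j), by simp [hi, hj], rfl⟩)
  have htop : Submodule.span ℂ (B : Set (s → ℂ)) = ⊤ := by
    rw [eq_top_iff]
    intro g _
    let P := Lagrange.interpolate Finset.univ x g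
    have hx : Set.InjOn x (Finset.univ : Finset s) := fun a _ b _ h => Subtype.ext h
    have : g = ∑ k ∈ Finset.range (P.natDegree + 1), P.coeff k • (x ^ k * y ^ 0) := by
      funext z
      have h := Lagrange.eval_interpolate_at_node g hx (Finset.mem_univ z)
      rw [← h, Polynomial.eval_eq_sum_range]
      simp [P]
    rw [this]
    exact Submodule.sum_mem _ fun k _ => Submodule.smul_mem _ _ (hmem _ k 0 rfl)
  have hr := finrank_span_finset_le_card (R := ℂ) B
  rw [Set.finrank, htop, finrank_top, Module.finrank_fintype_fun_eq_card, Fintype.card_coe] at hr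
  have hB : B.card ≤ (n - 1) * n := by
    refine Finset.card_image_le.trans ?_
    simp
  have : (n - 1) * n = n ^ 2 - n := by rw [Nat.sub_mul, one_mul, sq]
  omega

theorem real_coeff_harmonic_off_axes (p q : Polynomial ℝ) (n m : ℕ)
    (hpn : p.natDegree = n) (hqm : q.natDegree = m) (hnm : n > m) :
    {z : ℂ | (p.map (algebraMap ℝ ℂ)).eval z +
        (starRingEnd ℂ) ((q.map (algebraMap ℝ ℂ)).eval z) = 0 ∧
        z.re * z.im ≠ 0}.Finite ∧
      {z : ℂ | (p.map (algebraMap ℝ ℂ)).eval z +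
        (starRingEnd ℂ) ((q.map (algebraMap ℝ ℂ)).eval z) = 0 ∧
        z.re * z.im ≠ 0}.ncard ≤ n ^ 2 - n := by
  have key := aux_card p q n hpn (by omega)
  have hfin : {z : ℂ | (p.map (algebraMap ℝ ℂ)).eval z +
        (starRingEnd ℂ) ((q.map (algebraMap ℝ ℂ)).eval z) = 0 ∧
        z.re * z.im ≠ 0}.Finite := by
    by_contra h
    obtain ⟨t, ht, hc⟩ := Set.Infinite.exists_subset_card_eq h (n ^ 2 - n + 1)
    have := key t (fun z hz => ht hz)
    omega
  refine ⟨hfin, ?_⟩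
  rw [Set.ncard_eq_toFinset_card _ hfin]
  exact key _ (fun z hz => by simpa using hz)
end
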